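/- arXiv:2506.11296 — 2 statements merged into one kernel-verified Lean document; each statement's English description precedes it below -/
import Mathlib

section
/- Let d ≥ 1 be an integer, α ∈ (0,1), β ∈ (0,1), m > 0, and let v ∈ ℝ^d be a unit vector. Then u_{α,1}(t, m t^β v) → ∞ as t → ∞. -/
open Real MeasureTheory Filter Topology

/-- The Wright function `W_{λ,μ}(z) = ∑ z^n / (n! Γ(λn+μ))`.
(In Mathlib, `Real.Gamma` vanishes at nonpositive integers, so `1/Γ(s) = 0` there.) -/
noncomputable def wrightFn (l μ z : ℝ) : ℝ :=
  ∑' n : ℕ, z ^ n / (n.factorial * Real.Gamma (l * n + μ))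

/-- The fundamental solution `u_{α,1}` of `∂_t^α u − Δu = u`, `u(0,·)=δ₀`,
via the subordination formula. -/
noncomputable def fundSol (α : ℝ) (d : ℕ) (t : ℝ) (x : EuclideanSpace ℝ (Fin d)) : ℝ :=
  t ^ (-α) * ∫ s in Set.Ioi (0 : ℝ),
    Real.exp s * (Real.exp (-‖x‖ ^ 2 / (4 * s)) / (4 * Real.pi * s) ^ ((d : ℝ) / 2)) *
      wrightFn (-α) (1 - α) (-(t ^ (-α) * s))


set_option linter.unusedVariables false

open Real MeasureTheory Filter Topology

lemma aux_int (q c : ℝ) (hq : 0 < q) (hc : 0 < c) :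
    IntegrableOn (fun x : ℝ => x ^ (q-1) * Real.exp (-(c * x))) (Set.Ioi 0) := by
  have := integrableOn_rpow_mul_exp_neg_mul_rpow (p := 1) (s := q-1) (b := c) (by linarith) one_pos hc
  simpa using this

lemma aux_int_pow (n : ℕ) (c : ℝ) (hc : 0 < c) :
    IntegrableOn (fun x : ℝ => x ^ n * Real.exp (-(c * x))) (Set.Ioi 0) := by
  have := aux_int (n+1) c (by positivity) hc
  simpa using this

lemma aux_int_exp (c : ℝ) (hc : 0 < c) :
    IntegrableOn (fun x : ℝ => Real.exp (-(c * x))) (Set.Ioi 0) := by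
  simpa using aux_int_pow 0 c hc

/-- complex Gamma integral -/
noncomputable def cI (q : ℝ) (w : ℂ) : ℂ :=
  ∫ x in Set.Ioi (0:ℝ), ((x ^ (q-1) : ℝ) : ℂ) * Complex.exp (-(w * x))

lemma cI_meas (q : ℝ) (w : ℂ) : AEStronglyMeasurable (fun x : ℝ =>
    ((x ^ (q-1) : ℝ) : ℂ) * Complex.exp (-(w * x))) (volume.restrict (Set.Ioi 0)) := by
  apply Measurable.aestronglyMeasurable
  fun_prop

lemma cI_norm (q : ℝ) (w : ℂ) (x : ℝ) (hx : 0 < x) :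
    ‖((x ^ (q-1) : ℝ) : ℂ) * Complex.exp (-(w * x))‖ = x ^ (q-1) * Real.exp (-(w.re * x)) := by
  rw [norm_mul, Complex.norm_exp, Complex.norm_real, Real.norm_of_nonneg (by positivity)]
  simp

lemma cI_integrable (q : ℝ) (w : ℂ) (hq : 0 < q) (hw : 0 < w.re) : IntegrableOn (fun x : ℝ =>
    ((x ^ (q-1) : ℝ) : ℂ) * Complex.exp (-(w * x))) (Set.Ioi 0) := by
  refine (aux_int q w.re hq hw).mono' (cI_meas q w) ?_
  filter_upwards [ae_restrict_mem measurableSet_Ioi] with x hx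
  rw [cI_norm q w x hx]

lemma cI_deriv (q : ℝ) (w : ℂ) (hq : 0 < q) (hw : 0 < w.re) :
    HasDerivAt (cI q) (- cI (q+1) w) w := by
  have hs : {z : ℂ | w.re / 2 < z.re} ∈ 𝓝 w := by
    apply (isOpen_lt continuous_const Complex.continuous_re).mem_nhds
    simp; linarith
  have h := hasDerivAt_integral_of_dominated_loc_of_deriv_le (𝕜 := ℂ) (μ := volume.restrict (Set.Ioi (0:ℝ)))
    (F := fun w x => ((x ^ (q-1) : ℝ) : ℂ) * Complex.exp (-(w * x)))
    (F' := fun w x => -(((x ^ (q+1-1) : ℝ) : ℂ) * Complex.exp (-(w * x))))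
    (bound := fun x => x ^ (q+1-1) * Real.exp (-(w.re/2 * x))) (x₀ := w) hs
    (Eventually.of_forall fun z => cI_meas q z) (cI_integrable q w hq hw)
    (cI_meas (q+1) w).neg ?_ (aux_int (q+1) (w.re/2) (by linarith) (by linarith)) ?_
  · have h2 := h.2
    rw [integral_neg] at h2
    exact h2
  · filter_upwards [ae_restrict_mem measurableSet_Ioi] with x hx z hz
    have hx' : 0 < x := hx
    rw [norm_neg, cI_norm _ _ _ hx]
    have : w.re / 2 < z.re := hz
    gcongr
  · filter_upwards [ae_restrict_mem measurableSet_Ioi] with x hx z hz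
    have hx' : 0 < x := hx
    have h1 : HasDerivAt (fun w : ℂ => -(w * x)) (-(x:ℂ)) z := by
      simpa using ((hasDerivAt_id z).mul_const (x:ℂ)).fun_neg
    have := (h1.cexp).const_mul ((x ^ (q-1) : ℝ) : ℂ)
    convert! this using 1
    rw [show q + 1 - 1 = (q - 1) + 1 by ring, Real.rpow_add_one hx'.ne']
    push_cast; ring

lemma cI_rec (q : ℝ) (w : ℂ) (hq : 0 < q) (hw : 0 < w.re) :
    w * cI (q+1) w = q * cI q w := by
  have key := integral_Ioi_of_hasDerivAt_of_tendsto (a := 0) (m := (0:ℂ))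
    (f := fun x : ℝ => ((x ^ q : ℝ) : ℂ) * Complex.exp (-(w * x)))
    (f' := fun x : ℝ => q * (((x ^ (q-1) : ℝ) : ℂ) * Complex.exp (-(w * x))) -
      w * (((x ^ (q+1-1) : ℝ) : ℂ) * Complex.exp (-(w * x)))) ?_ ?_ ?_ ?_
  · rw [integral_sub ((cI_integrable q w hq hw).const_mul _)
      ((cI_integrable (q+1) w (by linarith) hw).const_mul _), integral_const_mul,
      integral_const_mul] at key
    simp only [Real.zero_rpow hq.ne'] at key
    simp at key
    have : (q:ℂ) * cI q w - w * cI (q+1) w = 0 := by simpa [cI] using key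
    linear_combination -this
  · apply ContinuousAt.continuousWithinAt
    have : ContinuousAt (fun x : ℝ => x ^ q) 0 := Real.continuousAt_rpow_const _ _ (Or.inr hq.le)
    fun_prop
  · intro x hx
    have hx' : 0 < x := hx
    have h1 : HasDerivAt (fun x : ℝ => ((x ^ q : ℝ) : ℂ)) ((q * x ^ (q-1) : ℝ) : ℂ) x :=
      (Real.hasDerivAt_rpow_const (Or.inl hx'.ne')).ofReal_comp
    have h2 : HasDerivAt (fun x : ℝ => -(w * (x:ℂ))) (-w) x := by
      simpa using ((Complex.ofRealCLM.hasDerivAt (x := x)).const_mul w).fun_neg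
    convert! h1.mul h2.cexp using 1
    simp only [add_sub_cancel_right]
    push_cast; ring
  · exact ((cI_integrable q w hq hw).const_mul _).sub
      ((cI_integrable (q+1) w (by linarith) hw).const_mul _)
  · rw [tendsto_zero_iff_norm_tendsto_zero]
    have := tendsto_rpow_mul_exp_neg_mul_atTop_nhds_zero q w.re hw
    refine this.congr' ?_
    filter_upwards [eventually_gt_atTop 0] with x hx
    have := cI_norm (q+1) w x hx
    simp only [add_sub_cancel_right] at this
    rw [this]; simp

lemma cI_one (q : ℝ) (hq : 0 < q) : cI q 1 = Real.Gamma q := by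
  rw [Real.Gamma_eq_integral hq, cI, ← integral_complex_ofReal]
  refine integral_congr_ae (Eventually.of_forall fun x => ?_)
  push_cast
  simp [mul_comm]

lemma cI_eq (q : ℝ) (w : ℂ) (hq : 0 < q) (hw : 0 < w.re) :
    cI q w = Real.Gamma q * Complex.exp (-(q * Complex.log w)) := by
  have hopen : IsOpen {z : ℂ | 0 < z.re} := isOpen_lt continuous_const Complex.continuous_re
  have hd : ∀ z ∈ {z : ℂ | 0 < z.re}, HasDerivAt (fun z => cI q z * Complex.exp (q * Complex.log z)) 0 z := by
    intro z hz
    have hz' : 0 < z.re := hz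
    have hz0 : z ≠ 0 := by rintro rfl; simp at hz'
    have h1 := (cI_deriv q z hq hz).mul ((Complex.hasDerivAt_log (Or.inl hz')).const_mul (q:ℂ)).cexp
    convert! h1 using 1
    have := cI_rec q z hq hz
    field_simp
    linear_combination Complex.exp (q * Complex.log z) * this
  have hc : IsPreconnected {z : ℂ | 0 < z.re} := (convex_halfSpace_re_gt 0).isPreconnected
  have := hopen.is_const_of_deriv_eq_zero hc (f := fun z => cI q z * Complex.exp (q * Complex.log z))
    (fun z hz => (hd z hz).differentiableAt.differentiableWithinAt) (fun z hz => (hd z hz).deriv)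
    (show w ∈ {z : ℂ | 0 < z.re} from hw) (show (1:ℂ) ∈ {z : ℂ | 0 < z.re} by simp)
  simp only [Complex.log_one, mul_zero, Complex.exp_zero, mul_one, cI_one q hq] at this
  rw [← this, mul_assoc, ← Complex.exp_add]
  simp

open Real MeasureTheory Filter Topology

noncomputable def ang (α : ℝ) : ℝ := π / (1 + α)
noncomputable def cc (α : ℝ) : ℝ := -Real.cos (ang α)
noncomputable def ss (α : ℝ) : ℝ := Real.sin (ang α)
noncomputable def dir (α : ℝ) : ℂ := Complex.exp (ang α * Complex.I)
noncomputable def gam (α a ρ : ℝ) : ℂ := a + ρ * dir α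
noncomputable def FF (α s r : ℝ) (σ : ℂ) : ℂ :=
  Complex.exp (σ - s * Complex.log σ - r * Complex.exp (α * Complex.log σ))
noncomputable def KK (α s r a : ℝ) : ℝ :=
  (1 / π) * (∫ ρ in Set.Ioi (0:ℝ), dir α * FF α s r (gam α a ρ)).im

section
variable {α : ℝ} (hα : α ∈ Set.Ioo (0:ℝ) 1)
include hα

lemma ang_lt : ang α < π := by
  have := pi_pos
  rw [ang, div_lt_iff₀ (by linarith [hα.1])]
  nlinarith [hα.1]

lemma ang_gt : π / 2 < ang α := by
  have := pi_pos
  rw [ang, div_lt_div_iff₀ (by linarith [hα.1]) (by linarith [hα.1])]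
  nlinarith [hα.2]

lemma ang_mul : α * ang α = π - ang α := by
  have : 1 + α ≠ 0 := by linarith [hα.1]
  rw [ang]; field_simp; ring

lemma cc_pos : 0 < cc α := by
  have := Real.cos_neg_of_pi_div_two_lt_of_lt (ang_gt hα) (by linarith [ang_lt hα, pi_pos])
  rw [cc]; linarith

lemma ss_pos : 0 < ss α :=
  Real.sin_pos_of_pos_of_lt_pi (by linarith [ang_gt hα, pi_pos]) (ang_lt hα)

omit hα in
lemma cs_one : cc α ^ 2 + ss α ^ 2 = 1 := by
  rw [cc, ss]; nlinarith [Real.sin_sq_add_cos_sq (ang α)]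

omit hα in
lemma dir_re : (dir α).re = - cc α := by simp [dir, cc, Complex.exp_ofReal_mul_I_re]
omit hα in
lemma dir_im : (dir α).im = ss α := by simp [dir, ss, Complex.exp_ofReal_mul_I_im]
omit hα in
lemma gam_re (a ρ : ℝ) : (gam α a ρ).re = a - cc α * ρ := by simp [gam, dir_re, dir_im]; ring
omit hα in
lemma gam_im (a ρ : ℝ) : (gam α a ρ).im = ss α * ρ := by simp [gam, dir_im, dir_re]; ring
omit hα in
lemma norm_dir : ‖dir α‖ = 1 := by simp [dir, Complex.norm_exp_ofReal_mul_I]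

lemma gam_norm_a (a ρ : ℝ) (ha : 0 ≤ a) : a * ss α ≤ ‖gam α a ρ‖ := by
  have h := cs_one (α := α)
  have := ss_pos hα
  apply le_of_sq_le_sq _ (norm_nonneg _) |> id
  rw [← Complex.normSq_eq_norm_sq, Complex.normSq_apply, gam_re, gam_im]
  have e : (a - cc α * ρ) * (a - cc α * ρ) + ss α * ρ * (ss α * ρ) =
    (a * ss α)^2 + (a * cc α - ρ)^2 := by linear_combination (ρ^2 - a^2) * h
  rw [e]; nlinarith [sq_nonneg (a * cc α - ρ)]

lemma gam_norm_r (a ρ : ℝ) (hρ : 0 ≤ ρ) : ρ * ss α ≤ ‖gam α a ρ‖ := by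
  have := ss_pos hα
  calc ρ * ss α = (gam α a ρ).im := by rw [gam_im]; ring
    _ ≤ _ := Complex.im_le_norm _

lemma gam_slit (a ρ : ℝ) (ha : 0 ≤ a) (hρ : 0 ≤ ρ) (h : 0 < a ∨ 0 < ρ) :
    gam α a ρ ∈ Complex.slitPlane := by
  rcases hρ.eq_or_lt with h0 | h0
  · subst h0
    left; rw [gam_re]
    simpa using h
  · right; rw [gam_im]
    have := ss_pos hα
    positivity

lemma gam_ne (a ρ : ℝ) (ha : 0 ≤ a) (hρ : 0 ≤ ρ) (h : 0 < a ∨ 0 < ρ) : gam α a ρ ≠ 0 :=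
  Complex.slitPlane_ne_zero (gam_slit hα a ρ ha hρ h)

lemma gam_arg (a ρ : ℝ) (ha : 0 ≤ a) (hρ : 0 ≤ ρ) (h : 0 < a ∨ 0 < ρ) :
    0 ≤ Complex.arg (gam α a ρ) ∧ Complex.arg (gam α a ρ) ≤ ang α := by
  have hs := ss_pos hα
  have h0 : 0 ≤ Complex.arg (gam α a ρ) := by
    rw [Complex.arg_nonneg_iff, gam_im]; positivity
  refine ⟨h0, ?_⟩
  by_contra hc
  push Not at hc
  set θ := Complex.arg (gam α a ρ)
  have hn : 0 < ‖gam α a ρ‖ := norm_pos_iff.2 (gam_ne hα a ρ ha hρ h)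
  have h1 : 0 < Real.sin (θ - ang α) := by
    apply Real.sin_pos_of_pos_of_lt_pi (by linarith)
    have := Complex.arg_le_pi (gam α a ρ)
    linarith [ang_gt hα, pi_pos]
  have e1 : ‖gam α a ρ‖ * Real.cos θ = a - cc α * ρ := by
    rw [Complex.norm_mul_cos_arg, gam_re]
  have e2 : ‖gam α a ρ‖ * Real.sin θ = ss α * ρ := by
    rw [Complex.norm_mul_sin_arg, gam_im]
  have : ‖gam α a ρ‖ * Real.sin (θ - ang α) = - (a * ss α) := by
    rw [Real.sin_sub, show Real.cos (ang α) = - cc α by simp [cc], show Real.sin (ang α) = ss α from rfl]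
    linear_combination (-cc α) * e2 - ss α * e1
  have h2 := mul_pos hn h1
  rw [this] at h2
  nlinarith [mul_nonneg ha hs.le]

omit hα in
lemma re_exp_log (σ : ℂ) (hσ : σ ≠ 0) :
    (Complex.exp (α * Complex.log σ)).re = ‖σ‖ ^ α * Real.cos (α * Complex.arg σ) := by
  rw [Complex.exp_re]
  simp only [Complex.re_ofReal_mul, Complex.im_ofReal_mul, Complex.log_re, Complex.log_im]
  rw [Real.rpow_def_of_pos (norm_pos_iff.2 hσ), mul_comm (Real.log _)]

lemma re_pow (a ρ : ℝ) (ha : 0 ≤ a) (hρ : 0 ≤ ρ) (h : 0 < a ∨ 0 < ρ) :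
    cc α * ‖gam α a ρ‖ ^ α ≤ (Complex.exp (α * Complex.log (gam α a ρ))).re := by
  rw [re_exp_log _ (gam_ne hα a ρ ha hρ h), mul_comm]
  gcongr
  obtain ⟨h1, h2⟩ := gam_arg hα a ρ ha hρ h
  rw [cc, ← Real.cos_pi_sub, ← ang_mul hα]
  apply Real.cos_le_cos_of_nonneg_of_le_pi (mul_nonneg hα.1.le h1)
  · rw [ang_mul hα]; linarith [ang_gt hα, pi_pos]
  · exact mul_le_mul_of_nonneg_left h2 hα.1.le

lemma FF_norm (a ρ s r m : ℝ) (ha : 0 ≤ a) (hρ : 0 ≤ ρ) (h : 0 < a ∨ 0 < ρ) (hs : 0 ≤ s)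
    (hr : 0 ≤ r) (hm : 0 < m) (hmg : m ≤ ‖gam α a ρ‖) :
    ‖FF α s r (gam α a ρ)‖ ≤ Real.exp (a - cc α * ρ) * m ^ (-s) * Real.exp (-(cc α * m ^ α * r)) := by
  rw [FF, Complex.norm_exp, Real.rpow_def_of_pos hm, ← Real.exp_add, ← Real.exp_add]
  apply Real.exp_le_exp.2
  simp only [Complex.sub_re, Complex.re_ofReal_mul, Complex.log_re, gam_re]
  have h1 := re_pow hα a ρ ha hρ h
  have h2 : m ^ α ≤ ‖gam α a ρ‖ ^ α := Real.rpow_le_rpow hm.le hmg hα.1.le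
  have h3 := Real.log_le_log hm hmg
  have h4 := mul_le_mul_of_nonneg_left h3 hs
  have h5 : cc α * m ^ α * r ≤ r * (Complex.exp (α * Complex.log (gam α a ρ))).re := by
    rw [mul_comm]
    exact mul_le_mul_of_nonneg_left ((mul_le_mul_of_nonneg_left h2 (cc_pos hα).le).trans h1) hr
  linarith

omit hα in
lemma FF_meas (s r a : ℝ) : Measurable (fun ρ : ℝ => dir α * FF α s r (gam α a ρ)) := by
  unfold FF gam
  fun_prop

omit hα in
lemma FF_meas2 (s a : ℝ) : Measurable (fun p : ℝ × ℝ => dir α * FF α s p.1 (gam α a p.2)) := by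
  unfold FF gam
  fun_prop

lemma FF_bound_a (a s r : ℝ) (ha : 0 < a) (hs : 0 ≤ s) (hr : 0 ≤ r) (ρ : ℝ) (hρ : 0 ≤ ρ) :
    ‖dir α * FF α s r (gam α a ρ)‖ ≤
      Real.exp a * (a * ss α) ^ (-s) * Real.exp (-(cc α * (a * ss α) ^ α * r)) *
        Real.exp (-(cc α * ρ)) := by
  have hs0 := ss_pos hα
  rw [norm_mul, norm_dir, one_mul]
  refine (FF_norm hα a ρ s r (a * ss α) ha.le hρ (Or.inl ha) hs hr (by positivity)
    (gam_norm_a hα a ρ ha.le)).trans (le_of_eq ?_)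
  rw [sub_eq_add_neg, Real.exp_add]; ring

lemma FF_int_a (a s r : ℝ) (ha : 0 < a) (hs : 0 ≤ s) (hr : 0 ≤ r) :
    IntegrableOn (fun ρ : ℝ => dir α * FF α s r (gam α a ρ)) (Set.Ioi 0) := by
  refine ((aux_int_exp (cc α) (cc_pos hα)).const_mul (Real.exp a * (a * ss α) ^ (-s) * Real.exp (-(cc α * (a * ss α) ^ α * r)))).mono'
    (FF_meas s r a).aestronglyMeasurable ?_
  filter_upwards [ae_restrict_mem measurableSet_Ioi] with ρ hρ
  exact FF_bound_a hα a s r ha hs hr ρ (le_of_lt hρ)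

omit hα in
lemma FF_real (s r a : ℝ) (ha : 0 < a) : (FF α s r (a:ℂ)).im = 0 := by
  have : FF α s r (a:ℂ) =
    ((Real.exp (a - s * Real.log a - r * Real.exp (α * Real.log a)) : ℝ) : ℂ) := by
    rw [FF, ← Complex.ofReal_log ha.le]; push_cast; rfl
  rw [this, Complex.ofReal_im]

noncomputable def FF' (α s r : ℝ) (σ : ℂ) : ℂ :=
  FF α s r σ * (1 - s * σ⁻¹ - r * (Complex.exp (α * Complex.log σ) * (α * σ⁻¹)))

omit hα in
lemma FF_deriv (s r : ℝ) (σ : ℂ) (hσ : σ ∈ Complex.slitPlane) :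
    HasDerivAt (FF α s r) (FF' α s r σ) σ := by
  have hl := Complex.hasDerivAt_log hσ
  have := (((hasDerivAt_id σ).sub (hl.const_mul (s:ℂ))).sub
    (((hl.const_mul (α:ℂ)).cexp).const_mul (r:ℂ))).cexp
  exact this

/-- The integral does not depend on `a > 0`. -/
lemma KK_indep (a b s r : ℝ) (ha : 0 < a) (hab : a ≤ b) (hs : 0 ≤ s) (hr : 0 ≤ r) :
    KK α s r a = KK α s r b := by
  have hs0 := ss_pos hα
  have hc0 := cc_pos hα
  have hb : 0 < b := ha.trans_le hab
  have key : ∀ R : ℝ, 0 < R → (∫ ρ in (0:ℝ)..R, dir α * FF α s r (gam α b ρ)) -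
      (∫ ρ in (0:ℝ)..R, dir α * FF α s r (gam α a ρ)) =
      (∫ x in a..b, FF α s r (gam α x R)) - ∫ x in a..b, FF α s r x := by
    intro R hR
    have hcont : ContinuousOn (fun p : ℝ × ℝ => dir α * FF' α s r (gam α p.1 p.2))
        (Set.Icc a b ×ˢ Set.Icc 0 R) := by
      have hsl : ∀ p ∈ (Set.Icc a b ×ˢ Set.Icc 0 R), gam α p.1 p.2 ∈ Complex.slitPlane := by
        rintro ⟨x, y⟩ ⟨hx, hy⟩
        exact gam_slit hα x y (ha.le.trans hx.1) hy.1 (Or.inl (ha.trans_le hx.1))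
      have hg : ContinuousOn (fun p : ℝ × ℝ => gam α p.1 p.2) (Set.Icc a b ×ˢ Set.Icc 0 R) := by
        unfold gam; fun_prop
      have hlog := hg.clog hsl
      have hinv := hg.inv₀ (fun p hp => Complex.slitPlane_ne_zero (hsl p hp))
      have hE := (continuousOn_const (c := (α:ℂ)).mul hlog).cexp
      have h1 := ((hg.sub (continuousOn_const (c := (s:ℂ)).mul hlog)).sub
        (continuousOn_const (c := (r:ℂ)).mul hE)).cexp
      have h2 := ((continuousOn_const (c := (1:ℂ))).sub (continuousOn_const (c := (s:ℂ)).mul hinv)).sub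
        (continuousOn_const (c := (r:ℂ)).mul (hE.mul (continuousOn_const (c := (α:ℂ)).mul hinv)))
      exact (continuousOn_const (c := dir α)).mul (h1.mul h2)
    have hint : IntegrableOn (Function.uncurry fun x ρ => dir α * FF' α s r (gam α x ρ))
        (Set.uIoc a b ×ˢ Set.uIoc 0 R) := by
      have := hcont.integrableOn_compact (isCompact_Icc.prod isCompact_Icc) (μ := volume)
      refine this.mono_set ?_
      rw [Set.uIoc_of_le hab, Set.uIoc_of_le hR.le]
      exact Set.prod_mono Set.Ioc_subset_Icc_self Set.Ioc_subset_Icc_self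
    have hsw := intervalIntegral_intervalIntegral_swap hint
    have e1 : ∀ ρ ∈ Set.uIcc 0 R, ∫ x in a..b, dir α * FF' α s r (gam α x ρ) =
        dir α * FF α s r (gam α b ρ) - dir α * FF α s r (gam α a ρ) := by
      intro ρ hρ
      rw [Set.uIcc_of_le hR.le] at hρ
      apply intervalIntegral.integral_eq_sub_of_hasDerivAt (f := fun x => dir α * FF α s r (gam α x ρ))
      · intro x hx
        rw [Set.uIcc_of_le hab] at hx
        have h1 : HasDerivAt (fun x : ℝ => gam α x ρ) 1 x := by
          unfold gam
          simpa using (Complex.ofRealCLM.hasDerivAt (x := x)).add_const (ρ * dir α)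
        have h2 := (FF_deriv (α := α) s r _ (gam_slit hα x ρ (ha.le.trans hx.1) hρ.1 (Or.inl (ha.trans_le hx.1)))).comp x h1
        simpa using h2.const_mul (dir α)
      · apply ContinuousOn.intervalIntegrable
        rw [Set.uIcc_of_le hab]
        exact hcont.comp (f := fun x : ℝ => (x, ρ)) (by fun_prop) (fun x hx => ⟨hx, hρ⟩)
    have e2 : ∀ x ∈ Set.uIcc a b, ∫ ρ in (0:ℝ)..R, dir α * FF' α s r (gam α x ρ) =
        FF α s r (gam α x R) - FF α s r x := by
      intro x hx
      rw [Set.uIcc_of_le hab] at hx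
      have h0 : gam α x 0 = x := by simp [gam]
      rw [← h0]
      apply intervalIntegral.integral_eq_sub_of_hasDerivAt (f := fun ρ => FF α s r (gam α x ρ))
      · intro ρ hρ
        rw [Set.uIcc_of_le hR.le] at hρ
        have h1 : HasDerivAt (fun ρ : ℝ => gam α x ρ) (dir α) ρ := by
          unfold gam
          simpa using ((Complex.ofRealCLM.hasDerivAt (x := ρ)).mul_const (dir α)).const_add (x:ℂ)
        have h2 := (FF_deriv (α := α) s r _ (gam_slit hα x ρ (ha.le.trans hx.1) hρ.1 (Or.inl (ha.trans_le hx.1)))).comp ρ h1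
        rw [mul_comm]; exact h2
      · apply ContinuousOn.intervalIntegrable
        rw [Set.uIcc_of_le hR.le]
        exact hcont.comp (f := fun ρ : ℝ => (x, ρ)) (by fun_prop) (fun ρ hρ => ⟨hx, hρ⟩)
    rw [intervalIntegral.integral_congr e2, intervalIntegral.integral_congr e1] at hsw
    have hFc : ∀ R', 0 ≤ R' → ContinuousOn (fun x : ℝ => FF α s r (gam α x R')) (Set.Icc a b) := by
      intro R' hR' x hx
      have h1 : ContinuousAt (fun x : ℝ => gam α x R') x := by unfold gam; fun_prop
      have := (FF_deriv (α := α) s r _ (gam_slit hα x R' (ha.le.trans hx.1) hR' (Or.inl (ha.trans_le hx.1)))).continuousAt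
      exact (ContinuousAt.comp (f := fun x : ℝ => gam α x R') this h1).continuousWithinAt
    have i1 : IntervalIntegrable (fun x : ℝ => FF α s r (gam α x R)) volume a b := by
      apply ContinuousOn.intervalIntegrable
      rw [Set.uIcc_of_le hab]; exact hFc R hR.le
    have i2 : IntervalIntegrable (fun x : ℝ => FF α s r x) volume a b := by
      apply ContinuousOn.intervalIntegrable
      rw [Set.uIcc_of_le hab]
      simpa [gam] using hFc 0 le_rfl
    have i3 : ∀ a', 0 < a' → IntervalIntegrable (fun ρ : ℝ => dir α * FF α s r (gam α a' ρ)) volume 0 R := by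
      intro a' ha'
      rw [intervalIntegrable_iff_integrableOn_Ioc_of_le hR.le]
      exact (FF_int_a hα a' s r ha' hs hr).mono_set Set.Ioc_subset_Ioi_self
    rw [← intervalIntegral.integral_sub (i3 b hb) (i3 a ha), ← intervalIntegral.integral_sub i1 i2]
    exact hsw.symm
  have him : (∫ x in a..b, FF α s r x).im = 0 := by
    have : (∫ x in a..b, FF α s r x) = ∫ x in a..b, (((FF α s r x).re : ℝ) : ℂ) := by
      apply intervalIntegral.integral_congr
      intro x hx
      rw [Set.uIcc_of_le hab] at hx
      apply Complex.ext
      · simp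
      · simpa using FF_real s r x (ha.trans_le hx.1)
    rw [this, intervalIntegral.integral_ofReal, Complex.ofReal_im]
  have t1 := intervalIntegral_tendsto_integral_Ioi 0 (FF_int_a hα b s r hb hs hr) tendsto_id
  have t2 := intervalIntegral_tendsto_integral_Ioi 0 (FF_int_a hα a s r ha hs hr) tendsto_id
  have t3 : Tendsto (fun R : ℝ => ∫ x in a..b, FF α s r (gam α x R)) atTop (𝓝 0) := by
    have hb1 : ∀ᶠ R : ℝ in atTop, ‖∫ x in a..b, FF α s r (gam α x R)‖ ≤
        (Real.exp b * (a * ss α) ^ (-s)) * Real.exp (-(cc α * R)) * |b - a| := by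
      filter_upwards [eventually_ge_atTop 0] with R hR
      apply intervalIntegral.norm_integral_le_of_norm_le_const
      intro x hx
      rw [Set.uIoc_of_le hab] at hx
      have hx0 : 0 < x := ha.trans hx.1
      refine (FF_norm hα x R s r (a * ss α) hx0.le hR (Or.inl hx0) hs hr (by positivity)
        ((mul_le_mul_of_nonneg_right hx.1.le hs0.le).trans (gam_norm_a hα x R hx0.le))).trans ?_
      have : Real.exp (-(cc α * (a * ss α) ^ α * r)) ≤ 1 := by
        rw [Real.exp_le_one_iff]
        have : 0 ≤ cc α * (a * ss α) ^ α * r := by positivity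
        linarith
      calc _ ≤ Real.exp (x - cc α * R) * (a * ss α) ^ (-s) * 1 := by gcongr
        _ ≤ Real.exp (b - cc α * R) * (a * ss α) ^ (-s) * 1 := by gcongr; exact hx.2
        _ = _ := by rw [sub_eq_add_neg, Real.exp_add]; ring
    refine squeeze_zero_norm' hb1 ?_
    have : Tendsto (fun R : ℝ => Real.exp (-(cc α * R))) atTop (𝓝 0) :=
      Real.tendsto_exp_neg_atTop_nhds_zero.comp (tendsto_id.const_mul_atTop hc0)
    simpa using (this.const_mul (Real.exp b * (a * ss α) ^ (-s))).mul_const (|b - a|)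
  have t4 := (t1.sub t2).congr' (f₂ := fun R => (∫ x in a..b, FF α s r (gam α x R)) - ∫ x in a..b, FF α s r x)
    (by filter_upwards [eventually_gt_atTop 0] with R hR using key R hR)
  have t5 := tendsto_nhds_unique t4 (t3.sub_const _)
  have := congrArg Complex.im t5
  simp only [Complex.sub_im, him] at this
  simp only [Complex.zero_im, sub_zero] at this
  rw [KK, KK]
  congr 1
  linarith
end

section
variable {α : ℝ} (hα : α ∈ Set.Ioo (0:ℝ) 1)
include hα

lemma sublin (r ε : ℝ) (hr : 0 ≤ r) (hε : 0 < ε) : ∃ C, ∀ ρ : ℝ, 0 < ρ → r * ρ ^ α ≤ C + ε * ρ := by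
  have h1 : Tendsto (fun x : ℝ => r * x ^ (-(1-α))) atTop (𝓝 0) := by
    simpa using (tendsto_rpow_neg_atTop (y := 1-α) (by linarith [hα.2])).const_mul r
  obtain ⟨R, hR0, hR⟩ := ((eventually_gt_atTop (0:ℝ)).and (h1.eventually (gt_mem_nhds hε))).exists
  refine ⟨r * R ^ α, fun ρ hρ => ?_⟩
  have hα0 := hα.1
  rcases le_total ρ R with h | h
  · have : r * ρ ^ α ≤ r * R ^ α := by gcongr
    have := mul_pos hε hρ
    linarith
  · have e : ρ ^ α = ρ ^ (-(1-α)) * ρ := by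
      rw [← Real.rpow_add_one hρ.ne']; congr 1; ring
    have h2 : ρ ^ (-(1-α)) ≤ R ^ (-(1-α)) :=
      Real.rpow_le_rpow_of_nonpos hR0 h (by linarith [hα.2])
    have h3 : r * ρ ^ (-(1-α)) ≤ ε := (mul_le_mul_of_nonneg_left h2 hr).trans hR.le
    have h4 : 0 ≤ r * R ^ α := by positivity
    rw [e, ← mul_assoc]
    nlinarith

lemma KK_zero (a s r : ℝ) (ha : 0 < a) (hs : 0 < s) (hs1 : s < 1) (hr : 0 ≤ r) :
    KK α s r a = KK α s r 0 := by
  have hss := ss_pos hα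
  have hcc := cc_pos hα
  have t1 : Tendsto (fun x : ℝ => ∫ ρ in Set.Ioi (0:ℝ), dir α * FF α s r (gam α x ρ)) (𝓝[>] 0)
      (𝓝 (∫ ρ in Set.Ioi (0:ℝ), dir α * FF α s r (gam α 0 ρ))) := by
    refine tendsto_integral_filter_of_dominated_convergence
      (fun ρ => (Real.exp 1 * (ss α) ^ (-s)) * (ρ ^ ((1-s)-1) * Real.exp (-(cc α * ρ)))) ?_ ?_ ?_ ?_
    · exact Eventually.of_forall fun x => (FF_meas s r x).aestronglyMeasurable
    · filter_upwards [Ioo_mem_nhdsGT (show (0:ℝ) < 1 by norm_num)] with x hx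
      filter_upwards [ae_restrict_mem measurableSet_Ioi] with ρ hρ
      have hρ' : 0 < ρ := hρ
      rw [norm_mul, norm_dir, one_mul]
      refine (FF_norm hα x ρ s r (ρ * ss α) hx.1.le hρ'.le (Or.inr hρ) hs.le hr (by positivity)
        (gam_norm_r hα x ρ hρ'.le)).trans ?_
      have : Real.exp (-(cc α * (ρ * ss α) ^ α * r)) ≤ 1 := by
        rw [Real.exp_le_one_iff]
        have : 0 ≤ cc α * (ρ * ss α) ^ α * r := by positivity
        linarith
      calc _ ≤ Real.exp (x - cc α * ρ) * (ρ * ss α) ^ (-s) * 1 := by gcongr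
        _ ≤ Real.exp (1 - cc α * ρ) * (ρ * ss α) ^ (-s) * 1 := by gcongr; exact hx.2.le
        _ = _ := by
          rw [sub_eq_add_neg, Real.exp_add, Real.mul_rpow hρ'.le hss.le, show 1 - s - 1 = -s by ring]; ring
    · exact (aux_int (1-s) (cc α) (by linarith) hcc).const_mul _
    · filter_upwards [ae_restrict_mem measurableSet_Ioi] with ρ hρ
      have hρ' : 0 < ρ := hρ
      have h1 : ContinuousAt (fun x : ℝ => gam α x ρ) 0 := by unfold gam; fun_prop
      have h2 := (FF_deriv (α := α) s r _ (gam_slit hα 0 ρ le_rfl hρ'.le (Or.inr hρ))).continuousAt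
      have h3 := (ContinuousAt.comp (f := fun x : ℝ => gam α x ρ) h2 h1)
      exact (h3.tendsto.const_mul (dir α)).mono_left nhdsWithin_le_nhds
  have t2 : Tendsto (fun x : ℝ => KK α s r x) (𝓝[>] 0) (𝓝 (KK α s r 0)) := by
    unfold KK
    exact ((Complex.continuous_im.tendsto _).comp t1).const_mul _
  have t3 : Tendsto (fun x : ℝ => KK α s r x) (𝓝[>] 0) (𝓝 (KK α s r a)) := by
    refine tendsto_const_nhds.congr' ?_
    filter_upwards [Ioo_mem_nhdsGT ha] with x hx
    exact (KK_indep hα x a s r hx.1 hx.2.le hs.le hr).symm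
  exact tendsto_nhds_unique t3 t2

omit hα in
lemma dir_ne : dir α ≠ 0 := Complex.exp_ne_zero _

lemma log_dir : Complex.log (dir α) = ang α * Complex.I := by
  rw [dir, Complex.log_exp]
  · simp; linarith [ang_gt hα, pi_pos]
  · simp; linarith [ang_lt hα]

lemma log_neg_dir : Complex.log (-dir α) = (ang α - π) * Complex.I := by
  have : -dir α = Complex.exp ((ang α - π) * Complex.I) := by
    rw [sub_mul, Complex.exp_sub, Complex.exp_pi_mul_I, dir, div_neg, div_one]
  rw [this, Complex.log_exp]
  · simp; linarith [ang_gt hα, pi_pos]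
  · simp; linarith [ang_lt hα, pi_pos]

lemma log_ray (ρ : ℝ) (hρ : 0 < ρ) :
    Complex.log (gam α 0 ρ) = Real.log ρ + ang α * Complex.I := by
  simp only [gam, Complex.ofReal_zero, zero_add]
  rw [Complex.log_ofReal_mul hρ dir_ne, log_dir hα]

lemma FF_ray (s ρ : ℝ) (hρ : 0 < ρ) :
    dir α * FF α s 0 (gam α 0 ρ) = Complex.exp ((1 - s) * (ang α * Complex.I)) *
      (((ρ ^ ((1-s)-1) : ℝ) : ℂ) * Complex.exp (-((-dir α) * ρ))) := by
  rw [FF, log_ray hα ρ hρ, Real.rpow_def_of_pos hρ, Complex.ofReal_exp, ← Complex.exp_add,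
    ← Complex.exp_add]
  nth_rewrite 1 [dir]
  rw [← Complex.exp_add]
  congr 1
  simp [gam]; ring

lemma ray_int (s : ℝ) (hs : s < 1) :
    ∫ ρ in Set.Ioi (0:ℝ), dir α * FF α s 0 (gam α 0 ρ) =
      Real.Gamma (1-s) * Complex.exp ((π * (1-s) : ℝ) * Complex.I) := by
  rw [setIntegral_congr_fun measurableSet_Ioi (fun ρ hρ => FF_ray hα s ρ hρ), integral_const_mul]
  have := cI_eq (1-s) (-dir α) (by linarith) (by simpa [dir_re] using cc_pos hα)
  rw [cI] at this
  rw [this, log_neg_dir hα, mul_left_comm, ← Complex.exp_add]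
  congr 2
  push_cast; ring

lemma KK_gamma (s : ℝ) (hs : s < 1) : KK α s 0 0 = 1 / Real.Gamma s := by
  rw [KK, ray_int hα s hs, Complex.im_ofReal_mul, Complex.exp_ofReal_mul_I_im]
  have h1 := Real.Gamma_mul_Gamma_one_sub s
  have h2 : Real.sin (π * (1-s)) = Real.sin (π * s) := by
    rw [show π * (1-s) = π - π * s by ring, Real.sin_pi_sub]
  have h3 : 0 < Real.Gamma (1-s) := Real.Gamma_pos_of_pos (by linarith)
  rw [h2]
  have hpi := pi_pos.ne'
  by_cases h0 : Real.sin (π * s) = 0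
  · rw [h0] at h1 ⊢
    have : Real.Gamma s = 0 := by
      have : Real.Gamma s * Real.Gamma (1-s) = 0 := by rw [h1]; simp
      rcases mul_eq_zero.1 this with h | h
      · exact h
      · exact absurd h h3.ne'
    rw [this]; simp
  · have hg : Real.Gamma s ≠ 0 := by
      intro h; rw [h, zero_mul] at h1
      exact div_ne_zero hpi h0 h1.symm
    rw [eq_div_iff h0] at h1
    rw [eq_div_iff hg]
    calc _ = (1 / π) * (Real.Gamma s * Real.Gamma (1-s) * Real.sin (π * s)) := by ring
      _ = 1 := by rw [h1]; field_simp

lemma wright_eq_zero (r : ℝ) :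
    wrightFn (-α) (1-α) (-r) = KK α (1-α) r 0 := by
  have hcc := cc_pos hα
  set F : ℕ → ℝ → ℂ := fun n ρ => (((-r)^n / n.factorial : ℝ) : ℂ) *
    (dir α * FF α (-α * n + (1-α)) 0 (gam α 0 ρ)) with hF
  have hs1 : ∀ n : ℕ, -α * n + (1-α) < 1 := by
    intro n
    have : 0 ≤ α * n := mul_nonneg hα.1.le (by positivity)
    linarith [hα.1]
  have hsum := hasSum_integral_of_dominated_convergence (μ := volume.restrict (Set.Ioi (0:ℝ)))
    (F := F) (f := fun ρ => dir α * FF α (1-α) r (gam α 0 ρ))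
    (fun n ρ => ((|r| * ρ ^ α)^n / n.factorial) * (ρ ^ (α - 1) * Real.exp (-(cc α * ρ)))) ?_ ?_ ?_ ?_ ?_
  · have h2 := (Complex.hasSum_im hsum).mul_left (1/π)
    rw [wrightFn, KK]
    refine Eq.trans ?_ h2.tsum_eq
    congr 1
    ext n
    have := KK_gamma hα _ (hs1 n)
    rw [KK] at this
    simp only [hF]
    rw [integral_const_mul, Complex.im_ofReal_mul, mul_left_comm, this, div_mul_div_comm, mul_one]
  · intro n
    exact ((FF_meas _ _ _).const_mul _).aestronglyMeasurable
  · intro n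
    filter_upwards [ae_restrict_mem measurableSet_Ioi] with ρ hρ
    have hρ' : 0 < ρ := hρ
    simp only [hF]
    rw [norm_mul, FF_ray hα _ ρ hρ, norm_mul, cI_norm _ _ _ hρ]
    have e1 : ‖Complex.exp ((1 - ((-α * n + (1-α) : ℝ) : ℂ)) * (ang α * Complex.I))‖ = 1 := by
      rw [← Complex.ofReal_one, ← Complex.ofReal_sub, ← mul_assoc, ← Complex.ofReal_mul,
        Complex.norm_exp_ofReal_mul_I]
    rw [e1, Complex.norm_real, norm_div, norm_pow, norm_neg, Real.norm_eq_abs]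
    simp only [Complex.neg_re, dir_re, neg_neg, one_mul]
    apply le_of_eq
    have e2 : ρ ^ (1 - (-α * n + (1-α)) - 1) = (ρ ^ α)^n * ρ ^ (α-1) := by
      rw [← Real.rpow_mul_natCast hρ'.le, ← Real.rpow_add hρ']
      congr 1; ring
    rw [e2]
    simp
    ring
  · filter_upwards with ρ
    exact (NormedSpace.expSeries_div_hasSum_exp (|r| * ρ ^ α)).summable.mul_right _
  · obtain ⟨C, hC⟩ := sublin hα |r| (cc α / 2) (abs_nonneg r) (by linarith)
    have e : (fun ρ : ℝ => ∑' n : ℕ, ((|r| * ρ ^ α)^n / n.factorial) * (ρ ^ (α - 1) * Real.exp (-(cc α * ρ)))) =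
        fun ρ => Real.exp (|r| * ρ ^ α) * (ρ ^ (α - 1) * Real.exp (-(cc α * ρ))) := by
      ext ρ
      rw [tsum_mul_right, (NormedSpace.expSeries_div_hasSum_exp (|r| * ρ ^ α)).tsum_eq, Real.exp_eq_exp_ℝ]
    rw [e]
    refine ((aux_int α (cc α / 2) hα.1 (by linarith)).const_mul (Real.exp C)).mono'
      (by apply Measurable.aestronglyMeasurable; fun_prop) ?_
    filter_upwards [ae_restrict_mem measurableSet_Ioi] with ρ hρ
    have hρ' : 0 < ρ := hρ
    rw [Real.norm_of_nonneg (by positivity)]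
    calc _ ≤ Real.exp (C + cc α / 2 * ρ) * (ρ ^ (α - 1) * Real.exp (-(cc α * ρ))) := by
          gcongr; exact hC ρ hρ
      _ = Real.exp C * (ρ ^ (α-1) * (Real.exp (cc α / 2 * ρ) * Real.exp (-(cc α * ρ)))) := by
          rw [Real.exp_add]; ring
      _ = _ := by rw [← Real.exp_add]; congr 4; ring
  · filter_upwards [ae_restrict_mem measurableSet_Ioi] with ρ hρ
    have hE := (NormedSpace.expSeries_div_hasSum_exp
      (-(r:ℂ) * Complex.exp (α * Complex.log (gam α 0 ρ)))).mul_left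
        (dir α * FF α (1-α) 0 (gam α 0 ρ))
    rw [← Complex.exp_eq_exp_ℂ] at hE
    convert! hE using 1
    · ext n
      simp only [hF, FF]
      rw [mul_pow, ← Complex.exp_nat_mul]
      have : Complex.exp (gam α 0 ρ - ((-α * n + (1-α) : ℝ) : ℂ) * Complex.log (gam α 0 ρ) -
          ((0:ℝ):ℂ) * Complex.exp (α * Complex.log (gam α 0 ρ))) =
        Complex.exp (gam α 0 ρ - ((1-α : ℝ) : ℂ) * Complex.log (gam α 0 ρ) -
          ((0:ℝ):ℂ) * Complex.exp (α * Complex.log (gam α 0 ρ))) *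
          Complex.exp (n * (α * Complex.log (gam α 0 ρ))) := by
        rw [← Complex.exp_add]; congr 1; push_cast; ring
      rw [this]; push_cast; ring
    · simp only [FF]
      rw [mul_assoc, ← Complex.exp_add]
      congr 2
      push_cast; ring

lemma wright_eq (r a : ℝ) (hr : 0 ≤ r) (ha : 0 < a) :
    wrightFn (-α) (1-α) (-r) = KK α (1-α) r a := by
  rw [wright_eq_zero hα, KK_zero hα a (1-α) r ha (by linarith [hα.2]) (by linarith [hα.1]) hr]
end

noncomputable def MM (α r : ℝ) : ℝ := wrightFn (-α) (1-α) (-r)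

section
variable {α : ℝ} (hα : α ∈ Set.Ioo (0:ℝ) 1)
include hα

lemma KK_recur (s a : ℝ) (ha : 0 < a) (hs : 0 ≤ s) : KK α s 0 a = s * KK α (s+1) 0 a := by
  have hcc := cc_pos hα
  have key := integral_Ioi_of_hasDerivAt_of_tendsto' (a := 0) (m := (0:ℂ))
    (f := fun ρ : ℝ => FF α s 0 (gam α a ρ))
    (f' := fun ρ : ℝ => dir α * FF α s 0 (gam α a ρ) - s * (dir α * FF α (s+1) 0 (gam α a ρ))) ?_ ?_ ?_
  · rw [integral_sub (FF_int_a hα a s 0 ha hs le_rfl)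
      ((FF_int_a hα a (s+1) 0 ha (by linarith) le_rfl).const_mul _), integral_const_mul (s:ℂ)] at key
    have h2 := congrArg Complex.im key
    have h0 : gam α a 0 = a := by simp [gam]
    rw [h0, Complex.sub_im, Complex.im_ofReal_mul, Complex.sub_im, FF_real s 0 a ha] at h2
    simp only [Complex.zero_im, sub_zero] at h2
    rw [KK, KK]
    linear_combination (1/π) * h2
  · intro ρ hρ
    have hsl := gam_slit hα a ρ ha.le hρ (Or.inl ha)
    have h1 : HasDerivAt (fun ρ : ℝ => gam α a ρ) (dir α) ρ := by
      unfold gam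
      simpa using ((Complex.ofRealCLM.hasDerivAt (x := ρ)).mul_const (dir α)).const_add (a:ℂ)
    have h2 := (FF_deriv (α := α) s 0 _ hsl).comp ρ h1
    convert! h2 using 1
    have e : FF α (s+1) 0 (gam α a ρ) = FF α s 0 (gam α a ρ) * (gam α a ρ)⁻¹ := by
      nth_rewrite 3 [← Complex.exp_log (Complex.slitPlane_ne_zero hsl)]
      rw [FF, FF, ← Complex.exp_neg, ← Complex.exp_add]
      congr 1; push_cast; ring
    rw [e, FF']; push_cast; ring
  · exact (FF_int_a hα a s 0 ha hs le_rfl).sub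
      ((FF_int_a hα a (s+1) 0 ha (by linarith) le_rfl).const_mul _)
  · have hb : ∀ᶠ ρ : ℝ in atTop, ‖FF α s 0 (gam α a ρ)‖ ≤ Real.exp a * (a * ss α) ^ (-s) * Real.exp (-(cc α * (a * ss α) ^ α * 0)) *
        Real.exp (-(cc α * ρ)) := by
      filter_upwards [eventually_ge_atTop 0] with ρ hρ
      have := FF_bound_a hα a s 0 ha hs le_rfl ρ hρ
      rwa [norm_mul, norm_dir, one_mul] at this
    refine squeeze_zero_norm' hb ?_
    have : Tendsto (fun R : ℝ => Real.exp (-(cc α * R))) atTop (𝓝 0) :=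
      Real.tendsto_exp_neg_atTop_nhds_zero.comp (tendsto_id.const_mul_atTop hcc)
    simpa using this.const_mul (Real.exp a * (a * ss α) ^ (-s) * Real.exp (-(cc α * (a * ss α) ^ α * 0)))

lemma KK_one (a : ℝ) (ha : 0 < a) (ham : a * ss α = 1) : KK α 1 0 a = 1 := by
  have hcc := cc_pos hα
  have t1 : Tendsto (fun s : ℝ => ∫ ρ in Set.Ioi (0:ℝ), dir α * FF α s 0 (gam α a ρ)) (𝓝[<] 1)
      (𝓝 (∫ ρ in Set.Ioi (0:ℝ), dir α * FF α 1 0 (gam α a ρ))) := by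
    refine tendsto_integral_filter_of_dominated_convergence
      (fun ρ => Real.exp a * Real.exp (-(cc α * ρ))) ?_ ?_ ?_ ?_
    · exact Eventually.of_forall fun x => (FF_meas x 0 a).aestronglyMeasurable
    · filter_upwards [Ioo_mem_nhdsLT (show (0:ℝ) < 1 by norm_num)] with s hs
      filter_upwards [ae_restrict_mem measurableSet_Ioi] with ρ hρ
      have := FF_bound_a hα a s 0 ha hs.1.le le_rfl ρ (le_of_lt hρ)
      simpa [ham] using this
    · exact (aux_int_exp (cc α) hcc).const_mul _
    · filter_upwards with ρ
      have : Continuous (fun s : ℝ => dir α * FF α s 0 (gam α a ρ)) := by unfold FF; fun_prop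
      exact (this.tendsto 1).mono_left nhdsWithin_le_nhds
  have t2 : Tendsto (fun s : ℝ => KK α s 0 a) (𝓝[<] 1) (𝓝 (KK α 1 0 a)) := by
    unfold KK
    exact ((Complex.continuous_im.tendsto _).comp t1).const_mul _
  have t3 : Tendsto (fun s : ℝ => 1 / Real.Gamma s) (𝓝[<] 1) (𝓝 (1 / Real.Gamma 1)) := by
    have : ContinuousAt Real.Gamma 1 := by
      apply (Real.differentiableAt_Gamma _).continuousAt
      intro m h
      have : (0:ℝ) ≤ m := by positivity
      linarith
    exact (tendsto_const_nhds.div this.tendsto (by simp)).mono_left nhdsWithin_le_nhds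
  have t4 : Tendsto (fun s : ℝ => KK α s 0 a) (𝓝[<] 1) (𝓝 (1 / Real.Gamma 1)) := by
    refine t3.congr' ?_
    filter_upwards [Ioo_mem_nhdsLT (show (0:ℝ) < 1 by norm_num)] with s hs
    rw [KK_zero hα a s 0 ha hs.1 hs.2 le_rfl, KK_gamma hα s hs.2]
  rw [tendsto_nhds_unique t2 t4]; simp

lemma KK_gamma_pos (a s : ℝ) (ha : 0 < a) (ham : a * ss α = 1) (hs : 0 < s) :
    KK α s 0 a = 1 / Real.Gamma s := by
  have base : ∀ s : ℝ, 0 < s → s ≤ 1 → KK α s 0 a = 1 / Real.Gamma s := by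
    intro s h0 h1
    rcases h1.eq_or_lt with h | h
    · subst h; rw [KK_one hα a ha ham]; simp
    · rw [KK_zero hα a s 0 ha h0 h le_rfl, KK_gamma hα s h]
  have step : ∀ n : ℕ, ∀ s : ℝ, 0 < s → s ≤ n + 1 → KK α s 0 a = 1 / Real.Gamma s := by
    intro n
    induction n with
    | zero => intro s h0 h1; exact base s h0 (by simpa using h1)
    | succ n ih =>
      intro s h0 h1
      by_cases h : s ≤ 1
      · exact base s h0 h
      · push Not at h
        have h2 := ih (s-1) (by linarith) (by push_cast at h1; linarith)
        have h3 := KK_recur hα (s-1) a ha (by linarith)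
        rw [sub_add_cancel] at h3
        have h4 : Real.Gamma s = (s-1) * Real.Gamma (s-1) := by
          have := Real.Gamma_add_one (s := s-1) (by linarith)
          rwa [sub_add_cancel] at this
        have h5 : s - 1 ≠ 0 := by linarith
        have h6 : Real.Gamma (s-1) ≠ 0 := (Real.Gamma_pos_of_pos (by linarith)).ne'
        rw [h2] at h3
        rw [h4]
        field_simp at h3 ⊢
        linarith
  obtain ⟨n, hn⟩ := exists_nat_ge s
  exact step n s hs (by linarith)

lemma MM_bound (l : ℝ) (hl : 0 < l) : ∃ C, 0 ≤ C ∧ ∀ r, 0 ≤ r → |MM α r| ≤ C * Real.exp (-(l * r)) := by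
  have hcc := cc_pos hα
  have hss := ss_pos hα
  set m : ℝ := (l / cc α) ^ (1/α)
  have hm : 0 < m := by positivity
  set a := m / ss α
  have ha : 0 < a := by positivity
  have ham : a * ss α = m := by simp only [a]; field_simp
  have hcm : cc α * m ^ α = l := by
    simp only [m]
    rw [← Real.rpow_mul (by positivity), one_div_mul_cancel hα.1.ne', Real.rpow_one]; field_simp
  refine ⟨(1/π) * (Real.exp a * m ^ (-(1-α)) * ∫ ρ in Set.Ioi (0:ℝ), Real.exp (-(cc α * ρ))), ?_, ?_⟩
  · have : 0 ≤ ∫ ρ in Set.Ioi (0:ℝ), Real.exp (-(cc α * ρ)) := integral_nonneg fun _ => (Real.exp_pos _).le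
    positivity
  · intro r hr
    rw [MM, wright_eq hα r a hr ha, KK, abs_mul, abs_of_pos (by positivity : 0 < 1/π)]
    have h1 := Complex.abs_im_le_norm (∫ ρ in Set.Ioi (0:ℝ), dir α * FF α (1-α) r (gam α a ρ))
    have h2 : ‖∫ ρ in Set.Ioi (0:ℝ), dir α * FF α (1-α) r (gam α a ρ)‖ ≤
      ∫ ρ in Set.Ioi (0:ℝ), Real.exp a * (a * ss α) ^ (-(1-α)) * Real.exp (-(cc α * (a * ss α) ^ α * r)) *
        Real.exp (-(cc α * ρ)) := by
      apply norm_integral_le_of_norm_le ((aux_int_exp (cc α) hcc).const_mul _)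
      filter_upwards [ae_restrict_mem measurableSet_Ioi] with ρ hρ
      exact FF_bound_a hα a (1-α) r ha (by linarith [hα.2]) hr ρ (le_of_lt hρ)
    rw [ham, hcm, integral_const_mul (Real.exp a * m ^ (-(1-α)) * Real.exp (-(l * r)))] at h2
    calc _ ≤ 1/π * (Real.exp a * m ^ (-(1-α)) * Real.exp (-(l * r)) * ∫ ρ in Set.Ioi (0:ℝ), Real.exp (-(cc α * ρ))) := by
          gcongr; exact h1.trans h2
      _ = _ := by ring

lemma MM_cont : ContinuousOn (MM α) (Set.Ici 0) := by
  have h1 : ContinuousOn (fun r => ∫ ρ in Set.Ioi (0:ℝ), dir α * FF α (1-α) r (gam α 1 ρ)) (Set.Ici 0) := by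
    have hcc := cc_pos hα
    have hss := ss_pos hα
    refine continuousOn_of_dominated
      (bound := fun ρ => Real.exp 1 * (1 * ss α) ^ (-(1-α)) * Real.exp (-(cc α * ρ))) ?_ ?_ ?_ ?_
    · intro r hr
      exact (FF_meas _ _ _).aestronglyMeasurable
    · intro r hr
      have hr' : 0 ≤ r := hr
      filter_upwards [ae_restrict_mem measurableSet_Ioi] with ρ hρ
      refine (FF_bound_a hα 1 (1-α) r one_pos (by linarith [hα.2]) hr ρ (le_of_lt hρ)).trans ?_
      have : Real.exp (-(cc α * (1 * ss α) ^ α * r)) ≤ 1 := by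
        rw [Real.exp_le_one_iff]
        have : 0 ≤ cc α * (1 * ss α) ^ α * r := by positivity
        linarith
      calc _ ≤ Real.exp 1 * (1 * ss α) ^ (-(1-α)) * 1 * Real.exp (-(cc α * ρ)) := by gcongr
        _ = _ := by ring
    · exact (aux_int_exp (cc α) hcc).const_mul _
    · filter_upwards with ρ
      have : Continuous (fun r : ℝ => dir α * FF α (1-α) r (gam α 1 ρ)) := by unfold FF; fun_prop
      exact this.continuousOn
  have h2 : ContinuousOn (fun r => KK α (1-α) r 1) (Set.Ici 0) := by
    unfold KK
    exact continuousOn_const.mul (Complex.continuous_im.comp_continuousOn h1)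
  exact h2.congr fun r hr => wright_eq hα r 1 hr one_pos

lemma MM_meas : AEStronglyMeasurable (MM α) (volume.restrict (Set.Ioi 0)) :=
  ((MM_cont hα).mono Set.Ioi_subset_Ici_self).aestronglyMeasurable measurableSet_Ioi

/-- integrability against exponentially bounded functions -/
lemma MM_int (f : ℝ → ℝ) (hf : Measurable f) (k : ℕ) (C l : ℝ)
    (hb : ∀ y, 0 < y → |f y| ≤ C * (y ^ k * Real.exp (l * y))) :
    IntegrableOn (fun y => f y * MM α y) (Set.Ioi 0) := by
  obtain ⟨D, hD0, hD⟩ := MM_bound hα (|l| + 1) (by positivity)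
  refine ((aux_int_pow k 1 one_pos).const_mul (C * D)).mono'
    (hf.aestronglyMeasurable.mul (MM_meas hα)) ?_
  filter_upwards [ae_restrict_mem measurableSet_Ioi] with y hy
  have hy' : 0 < y := hy
  rw [norm_mul, Real.norm_eq_abs, Real.norm_eq_abs]
  calc _ ≤ (C * (y ^ k * Real.exp (l * y))) * (D * Real.exp (-((|l|+1) * y))) := by
        gcongr
        · exact (abs_nonneg _).trans (hb y hy)
        · exact hb y hy
        · exact hD y hy'.le
    _ = C * D * (y ^ k * Real.exp (l * y - (|l|+1) * y)) := by
        rw [sub_eq_add_neg, Real.exp_add]; ring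
    _ ≤ C * D * (y ^ k * Real.exp (-(1 * y))) := by
        have hC : 0 ≤ C := by
          have := (abs_nonneg _).trans (hb y hy)
          exact nonneg_of_mul_nonneg_left this (by positivity)
        gcongr
        nlinarith [le_abs_self l]

lemma MM_moment (k : ℕ) :
    ∫ y in Set.Ioi (0:ℝ), y ^ k * MM α y = k.factorial / Real.Gamma (α * k + 1) := by
  have hcc := cc_pos hα
  have hss := ss_pos hα
  set a := (ss α)⁻¹
  have ha : 0 < a := by positivity
  have ham : a * ss α = 1 := by simp only [a]; field_simp
  set G : ℝ → ℝ → ℂ := fun r ρ => ((r^k : ℝ) : ℂ) * (dir α * FF α (1-α) r (gam α a ρ)) with hG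
  have hint : Integrable (Function.uncurry G)
      ((volume.restrict (Set.Ioi (0:ℝ))).prod (volume.restrict (Set.Ioi (0:ℝ)))) := by
    refine ((aux_int_pow k (cc α) hcc).mul_prod ((aux_int_exp (cc α) hcc).const_mul (Real.exp a))).mono' ?_ ?_
    · apply Measurable.aestronglyMeasurable
      have h1 := FF_meas2 (α := α) (1-α) a
      have h2 : Measurable (fun p : ℝ × ℝ => ((p.1^k : ℝ) : ℂ)) := by fun_prop
      exact h2.mul h1
    · rw [Measure.prod_restrict]
      filter_upwards [ae_restrict_mem (measurableSet_Ioi.prod measurableSet_Ioi)] with p hp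
      have h1 : 0 < p.1 := hp.1
      have h2 : 0 < p.2 := hp.2
      have := FF_bound_a hα a (1-α) p.1 ha (by linarith [hα.2]) h1.le p.2 h2.le
      rw [ham] at this
      simp only [Function.uncurry, hG]
      rw [norm_mul, Complex.norm_real, Real.norm_of_nonneg (by positivity)]
      calc _ ≤ p.1 ^ k * _ := mul_le_mul_of_nonneg_left this (by positivity)
        _ = _ := by simp; ring
  have e1 : ∀ r ∈ Set.Ioi (0:ℝ), r ^ k * MM α r = (1/π) * (∫ ρ in Set.Ioi (0:ℝ), G r ρ).im := by
    intro r hr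
    rw [MM, wright_eq hα r a (le_of_lt hr) ha, KK]
    simp only [hG]
    rw [integral_const_mul (((r^k:ℝ)):ℂ), Complex.im_ofReal_mul]; ring
  have e2 : ∀ ρ ∈ Set.Ioi (0:ℝ), ∫ r in Set.Ioi (0:ℝ), G r ρ =
      (k.factorial : ℂ) * (dir α * FF α (α * k + 1) 0 (gam α a ρ)) := by
    intro ρ hρ
    have hρ' : 0 < ρ := hρ
    set L := Complex.log (gam α a ρ) with hL
    set w := Complex.exp (α * L) with hw
    have hw0 : 0 < w.re := by
      refine lt_of_lt_of_le ?_ (re_pow hα a ρ ha.le hρ'.le (Or.inl ha))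
      have := norm_pos_iff.2 (gam_ne hα a ρ ha.le hρ'.le (Or.inl ha))
      positivity
    have hlw : Complex.log w = α * L := by
      obtain ⟨h1, h2⟩ := gam_arg hα a ρ ha.le hρ'.le (Or.inl ha)
      have h3 := ang_lt hα
      rw [hw, Complex.log_exp]
      · simp only [Complex.im_ofReal_mul, hL, Complex.log_im]
        have := mul_nonneg hα.1.le h1
        linarith [pi_pos]
      · simp only [Complex.im_ofReal_mul, hL, Complex.log_im]
        nlinarith [hα.1, hα.2]
    have h1 := cI_eq (k+1) w (by positivity) hw0
    rw [cI, hlw, Real.Gamma_nat_eq_factorial] at h1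
    have h2 : ∀ r ∈ Set.Ioi (0:ℝ), G r ρ = (dir α * Complex.exp (gam α a ρ - (1-α) * L)) *
        (((r ^ ((k:ℝ)+1-1) : ℝ) : ℂ) * Complex.exp (-(w * r))) := by
      intro r hr
      simp only [hG, FF]
      rw [sub_eq_add_neg _ ((r:ℂ) * _), Complex.exp_add, ← hL, ← hw]
      simp only [add_sub_cancel_right, Real.rpow_natCast]
      push_cast
      rw [mul_comm (r:ℂ) w]; ring
    rw [setIntegral_congr_fun measurableSet_Ioi h2, integral_const_mul, h1, FF, ← hL]
    rw [show dir α * Complex.exp (gam α a ρ - (1-α) * L) * (((k.factorial : ℝ):ℂ) * Complex.exp (-(((k+1:ℝ):ℂ) * (α * L)))) =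
      (k.factorial:ℂ) * (dir α * (Complex.exp (gam α a ρ - (1-α) * L) * Complex.exp (-(((k+1:ℝ):ℂ) * (α * L))))) by
        push_cast; ring, ← Complex.exp_add]
    congr 3
    push_cast; ring
  rw [setIntegral_congr_fun measurableSet_Ioi e1, integral_const_mul]
  have e3 : ∫ r in Set.Ioi (0:ℝ), (∫ ρ in Set.Ioi (0:ℝ), G r ρ).im =
      (∫ r in Set.Ioi (0:ℝ), ∫ ρ in Set.Ioi (0:ℝ), G r ρ).im := by
    have := Complex.imCLM.integral_comp_comm hint.integral_prod_left
    simpa using this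
  rw [e3, integral_integral_swap hint, setIntegral_congr_fun measurableSet_Ioi e2, integral_const_mul]
  have e4 := KK_gamma_pos hα a (α * k + 1) ha ham (by have := hα.1; positivity)
  rw [KK] at e4
  have : ((k.factorial : ℂ)) = ((k.factorial : ℝ) : ℂ) := by push_cast; rfl
  rw [this, Complex.im_ofReal_mul, mul_left_comm, e4, mul_one_div]
end

lemma pw_mono (t0 s u : ℝ) (ht : 0 < t0) (hs : 0 < s) (hsu : s ≤ u) (hu : u ≤ t0) :
    s * Real.exp (-(s/t0)) ≤ u * Real.exp (-(u/t0)) := by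
  have h1 := Real.add_one_le_exp (-((u-s)/t0))
  have h2 : s ≤ u * Real.exp (-((u-s)/t0)) := by
    have : u * (-((u-s)/t0) + 1) ≤ u * Real.exp (-((u-s)/t0)) := by gcongr; linarith
    refine le_trans ?_ this
    have h3 : u * ((u-s)/t0) ≤ u - s := by
      rw [mul_div_assoc', div_le_iff₀ ht]; nlinarith
    linarith
  calc s * Real.exp (-(s/t0)) ≤ (u * Real.exp (-((u-s)/t0))) * Real.exp (-(s/t0)) := by gcongr
    _ = _ := by rw [mul_assoc, ← Real.exp_add]; congr 2; field_simp; ring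

lemma pw_anti (t0 s u : ℝ) (ht : 0 < t0) (hu : t0 ≤ u) (hsu : u ≤ s)  :
    s * Real.exp (-(s/t0)) ≤ u * Real.exp (-(u/t0)) := by
  have h1 := Real.add_one_le_exp (((s-u)/t0))
  have h2 : s ≤ u * Real.exp (((s-u)/t0)) := by
    have : u * (((s-u)/t0) + 1) ≤ u * Real.exp (((s-u)/t0)) := by gcongr; linarith
    refine le_trans ?_ this
    have h3 : s - u ≤ u * ((s-u)/t0) := by
      rw [mul_div_assoc', le_div_iff₀ ht]; nlinarith
    linarith
  calc s * Real.exp (-(s/t0)) ≤ (u * Real.exp (((s-u)/t0))) * Real.exp (-(s/t0)) := by gcongr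
    _ = _ := by rw [mul_assoc, ← Real.exp_add]; congr 2; field_simp; ring

lemma pw_strict (t0 s : ℝ) (ht : 0 < t0) (hs : s ≠ t0) :
    s * Real.exp (-(s/t0)) < t0 * Real.exp (-(t0/t0)) := by
  have h0 : s/t0 - 1 ≠ 0 := by
    intro h; apply hs; field_simp at h; linarith
  have h1 := Real.add_one_lt_exp h0
  have h2 : s < t0 * Real.exp (s/t0 - 1) := by
    rw [sub_add_cancel, div_lt_iff₀ ht] at h1; linarith
  calc s * Real.exp (-(s/t0)) < (t0 * Real.exp (s/t0 - 1)) * Real.exp (-(s/t0)) := by gcongr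
    _ = _ := by rw [mul_assoc, ← Real.exp_add]; congr 2; field_simp; ring

lemma post_widder (f : ℝ → ℝ) (P : ℝ) (hf : ContinuousOn f (Set.Ioi 0))
    (hint : ∀ (n : ℕ) (q : ℝ), P < q → IntegrableOn (fun t => t ^ n * Real.exp (-(q * t)) * f t) (Set.Ioi 0))
    (hpos : ∀ (n : ℕ) (q : ℝ), P < q → 0 ≤ ∫ t in Set.Ioi (0:ℝ), t ^ n * Real.exp (-(q * t)) * f t)
    (t0 : ℝ) (ht : 0 < t0) : 0 ≤ f t0 := by
  by_contra! hneg
  set q := P + 1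
  set g : ℝ → ℝ := fun t => Real.exp (-(q * t)) * f t with hg
  set k : ℝ → ℝ := fun t => t * Real.exp (-(t/t0)) with hk
  have hkc : Continuous k := by simp only [hk]; fun_prop
  have hgi : IntegrableOn g (Set.Ioi 0) := by simpa [hg] using hint 0 q (by simp [q])
  have hgc : ContinuousAt g t0 := by
    have := hf.continuousAt (Ioi_mem_nhds ht)
    simp only [hg]; fun_prop
  have hg0 : g t0 < 0 := mul_neg_of_pos_of_neg (Real.exp_pos _) hneg
  -- near
  have hev : ∀ᶠ t in 𝓝 t0, g t < g t0 / 2 := hgc.eventually_lt continuousAt_const (by linarith)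
  obtain ⟨δ0, hδ0, hδ⟩ := Metric.eventually_nhds_iff.1 hev
  set δ := min (δ0/2) (t0/2)
  have hδp : 0 < δ := by positivity
  have hδ1 : δ < δ0 := (min_le_left _ _).trans_lt (by linarith)
  have hδ2 : δ < t0 := (min_le_right _ _).trans_lt (by linarith)
  set η := max (k (t0 - δ)) (k (t0+δ)) with hη
  have hη1 : η < k t0 := max_lt (pw_strict t0 _ ht (by linarith)) (pw_strict t0 _ ht (by linarith))
  have hη0 : 0 < η := lt_of_lt_of_le (by simp only [hk]; have : 0 < t0 - δ := by linarith
                                         positivity) (le_max_left _ _)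
  obtain ⟨η', h1, h2⟩ := exists_between hη1
  have hη' : 0 < η' := hη0.trans h1
  have hev2 : ∀ᶠ t in 𝓝 t0, η' < k t := continuousAt_const.eventually_lt hkc.continuousAt h2
  obtain ⟨ε0, hε0, hε⟩ := Metric.eventually_nhds_iff.1 hev2
  set ε := min ε0 δ
  have hεp : 0 < ε := by positivity
  have hεδ : ε ≤ δ := min_le_right _ _
  set A := Set.Ioo (t0 - ε) (t0 + ε)
  have hpt : ∀ n : ℕ, ∀ t ∈ Set.Ioi (0:ℝ), (k t / η')^n * g t ≤
      A.indicator (fun _ => g t0 / 2) t + (η/η')^n * |g t| := by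
    intro n t htt
    have htt' : 0 < t := htt
    have hkt : 0 < k t := by simp only [hk]; positivity
    by_cases hA : t ∈ A
    · rw [Set.indicator_of_mem hA]
      have hd : |t - t0| < ε := abs_lt.2 ⟨by linarith [hA.1], by linarith [hA.2]⟩
      have ha := hδ (y := t) (by rw [Real.dist_eq]; linarith)
      have hb := hε (y := t) (by rw [Real.dist_eq]; exact hd.trans_le (min_le_left _ _))
      have hc : 1 ≤ (k t/η')^n := one_le_pow₀ (by rw [one_le_div hη']; exact hb.le)
      have : 0 ≤ (η/η')^n * |g t| := by positivity
      nlinarith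
    · rw [Set.indicator_of_notMem hA, zero_add]
      by_cases hd : |t - t0| < δ
      · have ha := hδ (y := t) (by rw [Real.dist_eq]; linarith)
        have : 0 ≤ (η/η')^n * |g t| := by positivity
        have hc : 0 ≤ (k t/η')^n := by positivity
        nlinarith
      · have hkη : k t ≤ η := by
          rcases le_total t t0 with h | h
          · rw [abs_of_nonpos (by linarith)] at hd
            exact (pw_mono t0 t (t0-δ) ht htt' (by linarith) (by linarith)).trans (le_max_left _ _)
          · rw [abs_of_nonneg (by linarith)] at hd
            exact (pw_anti t0 t (t0+δ) ht (by linarith) (by linarith)).trans (le_max_right _ _)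
        calc _ ≤ (k t / η')^n * |g t| := by gcongr; exact le_abs_self _
          _ ≤ _ := by gcongr
  have hsub : A ⊆ Set.Ioi 0 := fun t h => by
    have := h.1
    show 0 < t
    linarith
  have hI : ∀ n : ℕ, 0 ≤ g t0 / 2 * (2 * ε) + (η/η')^n * ∫ t in Set.Ioi (0:ℝ), |g t| := by
    intro n
    have e : ∀ t, t ^ n * Real.exp (-((q + n/t0) * t)) * f t = (k t)^n * g t := by
      intro t
      simp only [hk, hg]
      rw [mul_pow, ← Real.exp_nat_mul, show -((q + n/t0) * t) = n * (-(t/t0)) + -(q*t) by ring, Real.exp_add]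
      ring
    have hqP : P < q + n/t0 := by
      have : 0 ≤ n/t0 := by positivity
      simp only [q]; linarith
    have p1 := hpos n (q + n/t0) hqP
    have p2 := hint n (q + n/t0) hqP
    simp only [e] at p1 p2
    have e2 : ∀ t, (k t/η')^n * g t = (η'^n)⁻¹ * ((k t)^n * g t) := by
      intro t; rw [div_pow]; field_simp
    have p3 : 0 ≤ ∫ t in Set.Ioi (0:ℝ), (k t/η')^n * g t := by
      simp only [e2]; rw [integral_const_mul]; positivity
    have p4 : IntegrableOn (fun t => (k t/η')^n * g t) (Set.Ioi 0) := by
      simp only [e2]; exact p2.const_mul _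
    have i1 : IntegrableOn (A.indicator (fun _ => g t0 / 2)) (Set.Ioi 0) := by
      apply Integrable.integrableOn
      rw [integrable_indicator_iff measurableSet_Ioo]
      exact integrableOn_const (by simp [A])
    have i2 : IntegrableOn (fun t => (η/η')^n * |g t|) (Set.Ioi 0) := hgi.abs.const_mul _
    have := setIntegral_mono_on p4 (i1.add i2) measurableSet_Ioi (hpt n)
    refine p3.trans (this.trans (le_of_eq ?_))
    simp only [Pi.add_apply]
    rw [integral_add i1 i2, integral_const_mul, setIntegral_indicator measurableSet_Ioo,
      Set.inter_eq_self_of_subset_right hsub, setIntegral_const]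
    simp only [A, measureReal_def, Real.volume_Ioo, smul_eq_mul]
    rw [ENNReal.toReal_ofReal (by linarith)]
    ring
  have hlim : Tendsto (fun n : ℕ => g t0 / 2 * (2 * ε) + (η/η')^n * ∫ t in Set.Ioi (0:ℝ), |g t|) atTop
      (𝓝 (g t0 / 2 * (2 * ε) + 0 * ∫ t in Set.Ioi (0:ℝ), |g t|)) :=
    ((tendsto_pow_atTop_nhds_zero_of_lt_one (by positivity) ((div_lt_one hη').2 h1)).mul_const _).const_add _
  have := ge_of_tendsto' hlim hI
  nlinarith

/-- completely monotone up to order n on (P, ∞) -/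
def CMo (P : ℝ) : ℕ → (ℝ → ℝ) → Prop
  | 0, f => ∀ p > P, 0 ≤ f p
  | n+1, f => (∀ p > P, 0 ≤ f p) ∧ ∃ f' : ℝ → ℝ, (∀ p > P, HasDerivAt f (-(f' p)) p) ∧ CMo P n f'

lemma CMo.nonneg {P n f} (h : CMo P n f) : ∀ p > P, 0 ≤ f p := by
  cases n with
  | zero => exact h
  | succ n => exact h.1

lemma CMo.pred {P : ℝ} {n : ℕ} : ∀ {f : ℝ → ℝ}, CMo P (n+1) f → CMo P n f := by
  induction n with
  | zero => intro f h; exact h.1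
  | succ n ih => intro f h; obtain ⟨h0, f', h1, h2⟩ := h; exact ⟨h0, f', h1, ih h2⟩

lemma CMo.add {P : ℝ} {n : ℕ} : ∀ {f g : ℝ → ℝ}, CMo P n f → CMo P n g → CMo P n (fun p => f p + g p) := by
  induction n with
  | zero => intro f g h h' p hp; exact add_nonneg (h p hp) (h' p hp)
  | succ n ih =>
    rintro f g ⟨h0, f', h1, h2⟩ ⟨k0, g', k1, k2⟩
    exact ⟨fun p hp => add_nonneg (h0 p hp) (k0 p hp), fun p => f' p + g' p,
      fun p hp => by convert! (h1 p hp).add (k1 p hp) using 1; ring, ih h2 k2⟩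

lemma CMo.const_mul {P c : ℝ} (hc : 0 ≤ c) {n : ℕ} : ∀ {f : ℝ → ℝ}, CMo P n f → CMo P n (fun p => c * f p) := by
  induction n with
  | zero => intro f h p hp; exact mul_nonneg hc (h p hp)
  | succ n ih =>
    rintro f ⟨h0, f', h1, h2⟩
    exact ⟨fun p hp => mul_nonneg hc (h0 p hp), fun p => c * f' p,
      fun p hp => by convert! (h1 p hp).const_mul c using 1; ring, ih h2⟩

lemma CMo.mul {P : ℝ} {n : ℕ} : ∀ {f g : ℝ → ℝ}, CMo P n f → CMo P n g → CMo P n (fun p => f p * g p) := by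
  induction n with
  | zero => intro f g h h' p hp; exact mul_nonneg (h p hp) (h' p hp)
  | succ n ih =>
    rintro f g hf hg
    have hf' := hf.pred
    have hg' := hg.pred
    obtain ⟨h0, f', h1, h2⟩ := hf
    obtain ⟨k0, g', k1, k2⟩ := hg
    exact ⟨fun p hp => mul_nonneg (h0 p hp) (k0 p hp), fun p => f' p * g p + f p * g' p,
      fun p hp => by convert! (h1 p hp).mul (k1 p hp) using 1; ring, (ih h2 hg').add (ih hf' k2)⟩

lemma CMo.congr {P : ℝ} {n : ℕ} : ∀ {f g : ℝ → ℝ}, CMo P n f → (∀ p > P, g p = f p) → CMo P n g := by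
  induction n with
  | zero => intro f g h h' p hp; rw [h' p hp]; exact h p hp
  | succ n ih =>
    rintro f g ⟨h0, f', h1, h2⟩ he
    refine ⟨fun p hp => by rw [he p hp]; exact h0 p hp, f', fun p hp => ?_, h2⟩
    apply (h1 p hp).congr_of_eventuallyEq
    filter_upwards [Ioi_mem_nhds hp] with y hy using he y hy

lemma CMo_rpow {P : ℝ} (hP : 0 ≤ P) (n : ℕ) : ∀ b : ℝ, 0 ≤ b → CMo P n (fun p => p ^ (-b)) := by
  induction n with
  | zero => intro b hb p hp; exact Real.rpow_nonneg (by linarith) _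
  | succ n ih =>
    intro b hb
    refine ⟨fun p hp => Real.rpow_nonneg (by linarith) _, fun p => b * p ^ (-(b+1)), fun p hp => ?_,
      (ih (b+1) (by linarith)).const_mul hb⟩
    convert Real.hasDerivAt_rpow_const (x := p) (p := -b) (Or.inl (by linarith)) using 1
    rw [show -(b+1) = -b - 1 by ring]; ring

lemma CMo_res {α x P : ℝ} (hα : α ∈ Set.Ioo (0:ℝ) 1) (hx : 0 ≤ x) (hP : 0 ≤ P) (n : ℕ) :
    ∀ b : ℝ, 0 ≤ b → CMo P n (fun p => (p ^ α + x) ^ (-b)) := by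
  induction n with
  | zero => intro b hb p hp; have : 0 < p := by linarith
            positivity
  | succ n ih =>
    intro b hb
    refine ⟨fun p hp => by have : 0 < p := by linarith
                           positivity, fun p => (b * α) * (p ^ (-(1-α)) * (p ^ α + x) ^ (-(b+1))), fun p hp => ?_,
      ((CMo_rpow hP n (1-α) (by linarith [hα.2])).mul (ih (b+1) (by linarith))).const_mul
        (mul_nonneg hb hα.1.le)⟩
    have hp0 : 0 < p := by linarith
    have h1 : 0 < p ^ α + x := by positivity
    have := ((Real.hasDerivAt_rpow_const (x := p) (p := α) (Or.inl hp0.ne')).add_const x).rpow_const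
      (p := -b) (Or.inl h1.ne')
    convert this using 1
    rw [show -(b+1) = -b - 1 by ring, show -(1-α) = α - 1 by ring]; ring

lemma lap_deriv (f : ℝ → ℝ) (P : ℝ)
    (hint : ∀ (n : ℕ) (q : ℝ), P < q → IntegrableOn (fun t => t ^ n * Real.exp (-(q * t)) * f t) (Set.Ioi 0))
    (n : ℕ) (p : ℝ) (hp : P < p) :
    HasDerivAt (fun q => ∫ t in Set.Ioi (0:ℝ), t ^ n * Real.exp (-(q * t)) * f t)
      (-∫ t in Set.Ioi (0:ℝ), t ^ (n+1) * Real.exp (-(p * t)) * f t) p := by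
  have hr : 0 < (p - P)/2 := by linarith
  rw [← integral_neg]
  refine (hasDerivAt_integral_of_dominated_loc_of_deriv_le (μ := volume.restrict (Set.Ioi (0:ℝ)))
    (F := fun q t => t ^ n * Real.exp (-(q * t)) * f t) (F' := fun q t => -(t ^ (n+1) * Real.exp (-(q * t)) * f t))
    (x₀ := p) (bound := fun t => |t ^ (n+1) * Real.exp (-((p+P)/2 * t)) * f t|)
    (Metric.ball_mem_nhds p hr) ?_ ?_ ?_ ?_ ?_ ?_).2
  · filter_upwards [Ioi_mem_nhds hp] with q hq using (hint n q hq).aestronglyMeasurable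
  · exact hint n p hp
  · exact (hint (n+1) p hp).aestronglyMeasurable.neg
  · filter_upwards [ae_restrict_mem measurableSet_Ioi] with t ht q hq
    have ht' : 0 < t := ht
    rw [Metric.mem_ball, Real.dist_eq, abs_lt] at hq
    rw [norm_neg, Real.norm_eq_abs, abs_mul, abs_mul, abs_mul, abs_mul, Real.abs_exp, Real.abs_exp]
    gcongr
    linarith
  · exact (hint (n+1) _ (by linarith)).abs
  · filter_upwards with t q hq
    have h1 : HasDerivAt (fun q : ℝ => Real.exp (-(q*t))) (Real.exp (-(q*t)) * (-(1*t))) q :=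
      ((hasDerivAt_id q).mul_const t).neg.exp
    convert! (h1.const_mul (t^n)).mul_const (f t) using 1
    ring

lemma lap_nonneg (f : ℝ → ℝ) (P : ℝ)
    (hint : ∀ (n : ℕ) (q : ℝ), P < q → IntegrableOn (fun t => t ^ n * Real.exp (-(q * t)) * f t) (Set.Ioi 0))
    (n : ℕ) : ∀ j : ℕ, CMo P n (fun q => ∫ t in Set.Ioi (0:ℝ), t ^ j * Real.exp (-(q * t)) * f t) →
    ∀ p > P, 0 ≤ ∫ t in Set.Ioi (0:ℝ), t ^ (j+n) * Real.exp (-(p * t)) * f t := by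
  induction n with
  | zero => intro j h; exact h
  | succ n ih =>
    rintro j ⟨h0, f', h1, h2⟩ p hp
    have := ih (j+1) (h2.congr fun q hq => by
      have := (h1 q hq).unique (lap_deriv f P hint j q hq)
      linarith) p hp
    rwa [show j + (n+1) = j + 1 + n by ring]

lemma lap_pos (f : ℝ → ℝ) (P : ℝ) (hf : ContinuousOn f (Set.Ioi 0))
    (hint : ∀ (n : ℕ) (q : ℝ), P < q → IntegrableOn (fun t => t ^ n * Real.exp (-(q * t)) * f t) (Set.Ioi 0))
    (hcm : ∀ n, CMo P n (fun q => ∫ t in Set.Ioi (0:ℝ), Real.exp (-(q * t)) * f t))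
    (t0 : ℝ) (ht : 0 < t0) : 0 ≤ f t0 := by
  refine post_widder f P hf hint (fun n q hq => ?_) t0 ht
  have := lap_nonneg f P hint n 0 (by simpa using hcm n) q hq
  simpa using this

noncomputable def HH (α : ℝ) (k : ℕ) (x : ℝ) : ℝ :=
  ∫ y in Set.Ioi (0:ℝ), y ^ k * Real.exp (-(x * y)) * MM α y

section
variable {α : ℝ} (hα : α ∈ Set.Ioo (0:ℝ) 1)
include hα

lemma HH_int (k : ℕ) (x : ℝ) :
    IntegrableOn (fun y => y ^ k * Real.exp (-(x * y)) * MM α y) (Set.Ioi 0) := by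
  refine MM_int hα (fun y => y ^ k * Real.exp (-(x * y))) (by fun_prop) k 1 (-x) ?_
  intro y hy
  rw [abs_of_nonneg (by positivity), one_mul, neg_mul]

lemma pow_int (k : ℕ) : IntegrableOn (fun y => y ^ k * MM α y) (Set.Ioi 0) := by
  simpa using HH_int hα k 0

lemma HH_series (k : ℕ) (x : ℝ) :
    HasSum (fun j : ℕ => (-x)^j / j.factorial * ((k+j).factorial / Real.Gamma (α * (k+j:ℕ) + 1))) (HH α k x) := by
  have hs : ∀ z : ℝ, HasSum (fun j : ℕ => z ^ j / j.factorial) (Real.exp z) := by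
    intro z
    rw [Real.exp_eq_exp_ℝ]
    exact NormedSpace.expSeries_div_hasSum_exp z
  have := hasSum_integral_of_dominated_convergence (μ := volume.restrict (Set.Ioi (0:ℝ)))
    (F := fun (j:ℕ) y => (-x)^j / j.factorial * (y ^ (k+j) * MM α y))
    (f := fun y => y ^ k * Real.exp (-(x * y)) * MM α y)
    (fun (j:ℕ) y => |(|x| * y)^j / j.factorial * (y ^ k * MM α y)|) ?_ ?_ ?_ ?_ ?_
  · rw [HH]
    have e : ∀ j : ℕ, (-x)^j / j.factorial * ((k+j).factorial / Real.Gamma (α * (k+j:ℕ) + 1)) =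
        ∫ y in Set.Ioi (0:ℝ), (-x)^j / j.factorial * (y ^ (k+j) * MM α y) := by
      intro j
      rw [integral_const_mul, MM_moment hα]
    simp only [e]
    exact this
  · intro j
    exact ((pow_int hα (k+j)).const_mul _).aestronglyMeasurable
  · intro j
    filter_upwards with y
    apply le_of_eq
    rw [Real.norm_eq_abs]
    simp only [abs_mul, abs_div, abs_pow, abs_neg, abs_abs, mul_pow, pow_add]
    ring
  · filter_upwards [ae_restrict_mem measurableSet_Ioi] with y hy
    exact ((hs (|x| * y)).mul_right (y^k * MM α y)).summable.abs
  · have : IntegrableOn (fun y => ‖y ^ k * Real.exp (-(-|x| * y)) * MM α y‖) (Set.Ioi 0) := (HH_int hα k (-|x|)).norm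
    refine this.congr ?_
    filter_upwards [ae_restrict_mem measurableSet_Ioi] with y hy
    have hy' : 0 < y := hy
    have h1 := (hs (|x| * y)).mul_right |y^k * MM α y|
    have : ∀ j : ℕ, |(|x| * y)^j / j.factorial * (y ^ k * MM α y)| = (|x| * y)^j / j.factorial * |y^k * MM α y| := by
      intro j; rw [abs_mul, abs_of_nonneg (by positivity : 0 ≤ (|x| * y)^j / j.factorial)]
    simp only [this]
    rw [h1.tsum_eq, Real.norm_eq_abs, mul_comm (y^k), mul_assoc, abs_mul, Real.abs_exp]
    congr 2; ring
  · filter_upwards with y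
    have e : ∀ j : ℕ, (-x)^j / j.factorial * (y ^ (k+j) * MM α y) =
        (-(x*y))^j / j.factorial * (y^k * MM α y) := by
      intro j; rw [← neg_mul, mul_pow, pow_add]; ring
    have e2 : y ^ k * Real.exp (-(x * y)) * MM α y = Real.exp (-(x*y)) * (y^k * MM α y) := by ring
    simp only [e, e2]
    exact (hs (-(x*y))).mul_right (y^k * MM α y)

lemma HH_bound (k : ℕ) (x : ℝ) (hx : 0 ≤ x) :
    |HH α k x| ≤ ∫ y in Set.Ioi (0:ℝ), |y ^ k * MM α y| := by
  rw [HH, ← Real.norm_eq_abs]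
  apply norm_integral_le_of_norm_le (pow_int hα k).abs
  filter_upwards [ae_restrict_mem measurableSet_Ioi] with y hy
  have hy' : 0 < y := hy
  have : Real.exp (-(x*y)) ≤ 1 := by rw [Real.exp_le_one_iff]; nlinarith
  rw [Real.norm_eq_abs, mul_right_comm, abs_mul, Real.abs_exp]
  exact mul_le_of_le_one_right (abs_nonneg _) this

lemma HH_cont (k : ℕ) : ContinuousOn (HH α k) (Set.Ici 0) := by
  unfold HH
  refine continuousOn_of_dominated (bound := fun y => |y ^ k * MM α y|) ?_ ?_ ?_ ?_
  · intro x hx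
    exact (HH_int hα k x).aestronglyMeasurable
  · intro x hx
    have hx' : 0 ≤ x := hx
    filter_upwards [ae_restrict_mem measurableSet_Ioi] with y hy
    have hy' : 0 < y := hy
    have : Real.exp (-(x*y)) ≤ 1 := by rw [Real.exp_le_one_iff]; nlinarith
    rw [Real.norm_eq_abs, mul_right_comm, abs_mul, Real.abs_exp]
    exact mul_le_of_le_one_right (abs_nonneg _) this
  · exact (pow_int hα k).abs
  · filter_upwards with y
    fun_prop

lemma hk_cont (k : ℕ) (x : ℝ) (hx : 0 < x) :
    ContinuousOn (fun t : ℝ => t ^ (α * k) * HH α k (x * t ^ α)) (Set.Ioi 0) := by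
  have h1 : ∀ b : ℝ, ContinuousOn (fun t : ℝ => t ^ b) (Set.Ioi 0) := fun b =>
    continuousOn_id.rpow_const fun t ht => Or.inl (ne_of_gt ht)
  refine (h1 _).mul ((HH_cont hα k).comp (continuousOn_const.mul (h1 α)) ?_)
  intro t ht
  have : 0 < t := ht
  show 0 ≤ x * t ^ α
  positivity

lemma hk_int (k : ℕ) (x : ℝ) (hx : 0 < x) (n : ℕ) (q : ℝ) (hq : 0 < q) :
    IntegrableOn (fun t : ℝ => t ^ n * Real.exp (-(q * t)) * (t ^ (α * k) * HH α k (x * t ^ α))) (Set.Ioi 0) := by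
  set C := ∫ y in Set.Ioi (0:ℝ), |y ^ k * MM α y|
  have h0 := hα.1
  refine ((aux_int (n + α * k + 1) q (by positivity) hq).const_mul C).mono' ?_ ?_
  · refine ContinuousOn.aestronglyMeasurable (ContinuousOn.mul (by fun_prop) (hk_cont hα k x hx)) measurableSet_Ioi
  · filter_upwards [ae_restrict_mem measurableSet_Ioi] with t ht
    have ht' : 0 < t := ht
    have hb := HH_bound hα k (x * t ^ α) (by positivity)
    rw [Real.norm_eq_abs, ← mul_assoc, abs_mul, abs_of_nonneg (by positivity : 0 ≤ t ^ n * Real.exp (-(q * t)) * t ^ (α * k))]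
    calc _ ≤ t ^ n * Real.exp (-(q * t)) * t ^ (α * k) * C := by gcongr
      _ = _ := by
        rw [add_sub_cancel_right, Real.rpow_add ht', Real.rpow_natCast]; ring

lemma hk_lap (k : ℕ) (x : ℝ) (hx : 0 < x) (p : ℝ) (hp : 0 < p) (hpx : x < p ^ α) :
    ∫ t in Set.Ioi (0:ℝ), Real.exp (-(p * t)) * (t ^ (α * k) * HH α k (x * t ^ α)) =
      k.factorial * (p ^ (-(1-α)) * (p ^ α + x) ^ (-((k:ℝ)+1))) := by
  have h0 := hα.1
  have hpa : 0 < p ^ α := by positivity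
  set F : ℕ → ℝ → ℝ := fun j t => ((-x)^j / j.factorial * ((k+j).factorial / Real.Gamma (α * (k+j:ℕ) + 1))) *
    (t ^ (α * (k+j:ℕ) + 1 - 1) * Real.exp (-(p*t))) with hF
  have hG : ∀ j : ℕ, 0 < Real.Gamma (α * (k+j:ℕ) + 1) := fun j => Real.Gamma_pos_of_pos (by positivity)
  have hFi : ∀ j, IntegrableOn (F j) (Set.Ioi 0) := fun j =>
    (aux_int (α * (k+j:ℕ) + 1) p (by positivity) hp).const_mul _
  have hI0 : ∀ j : ℕ, ∫ t in Set.Ioi (0:ℝ), t ^ (α * (k+j:ℕ) + 1 - 1) * Real.exp (-(p*t)) =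
      p ^ (-(α * k) - 1) * ((p^α)⁻¹)^j * Real.Gamma (α * (k+j:ℕ) + 1) := by
    intro j
    rw [Real.integral_rpow_mul_exp_neg_mul_Ioi (by positivity) hp]
    congr 1
    rw [one_div, Real.inv_rpow hp.le, ← Real.rpow_neg hp.le, ← Real.rpow_neg hp.le, ← Real.rpow_natCast,
      ← Real.rpow_mul hp.le, ← Real.rpow_add hp]
    congr 1; push_cast; ring
  have hch : ∀ j : ℕ, ((k+j).factorial : ℝ) / j.factorial = k.factorial * ((j+k).choose k : ℝ) := by
    intro j
    have := Nat.add_choose_mul_factorial_mul_factorial j k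
    rw [Nat.add_comm k j, ← this]
    push_cast
    field_simp
  set r := -x * (p^α)⁻¹ with hr
  have hr1 : ‖r‖ < 1 := by
    rw [hr, neg_mul, norm_neg, Real.norm_of_nonneg (by positivity), ← div_eq_mul_inv, div_lt_one hpa]; exact hpx
  have hI : ∀ j, ∫ t in Set.Ioi (0:ℝ), F j t = k.factorial * p ^ (-(α * k) - 1) * (((j+k).choose k : ℝ) * r ^ j) := by
    intro j
    simp only [hF]
    rw [integral_const_mul, hI0, hr, mul_pow]
    have := hch j
    have h2 := (hG j).ne'
    calc _ = (((k+j).factorial : ℝ) / j.factorial) * ((-x)^j * p ^ (-(α * k) - 1) * ((p^α)⁻¹)^j) *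
          (Real.Gamma (α * (k+j:ℕ) + 1) / Real.Gamma (α * (k+j:ℕ) + 1)) := by ring
      _ = _ := by rw [this, div_self h2]; ring
  have hN : ∀ j, ∫ t in Set.Ioi (0:ℝ), ‖F j t‖ = ‖∫ t in Set.Ioi (0:ℝ), F j t‖ := by
    intro j
    have : ∀ t ∈ Set.Ioi (0:ℝ), ‖F j t‖ = ‖((-x)^j / j.factorial * ((k+j).factorial / Real.Gamma (α * (k+j:ℕ) + 1)))‖ *
        (t ^ (α * (k+j:ℕ) + 1 - 1) * Real.exp (-(p*t))) := by
      intro t ht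
      have ht' : 0 < t := ht
      simp only [hF]
      rw [norm_mul, Real.norm_of_nonneg (by positivity : 0 ≤ t ^ (α * (k+j:ℕ) + 1 - 1) * Real.exp (-(p*t)))]
    rw [setIntegral_congr_fun measurableSet_Ioi this, integral_const_mul]
    simp only [hF]
    have := hG j
    rw [integral_const_mul, hI0, norm_mul _ (p ^ (-(α * k) - 1) * ((p^α)⁻¹)^j * Real.Gamma (α * (k+j:ℕ) + 1)), Real.norm_of_nonneg (by positivity : 0 ≤ p ^ (-(α * k) - 1) * ((p^α)⁻¹)^j * Real.Gamma (α * (k+j:ℕ) + 1))]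
  have hsum : Summable fun j => ∫ t in Set.Ioi (0:ℝ), ‖F j t‖ := by
    simp only [hN, hI]
    exact ((summable_choose_mul_geometric_of_norm_lt_one k hr1).mul_left _).norm
  have key := hasSum_integral_of_summable_integral_norm hFi hsum
  have key2 := (hasSum_choose_mul_geometric_of_norm_lt_one k hr1).mul_left (k.factorial * p ^ (-(α * k) - 1))
  simp only [hI] at key
  have key3 := key.unique key2
  have e : ∀ t ∈ Set.Ioi (0:ℝ), Real.exp (-(p * t)) * (t ^ (α * k) * HH α k (x * t ^ α)) = ∑' j, F j t := by
    intro t ht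
    have ht' : 0 < t := ht
    have := (HH_series hα k (x * t ^ α)).mul_left (Real.exp (-(p * t)) * t ^ (α * k))
    rw [← mul_assoc, ← this.tsum_eq]
    congr 1; ext j
    simp only [hF]
    rw [add_sub_cancel_right, ← neg_mul x, mul_pow, ← Real.rpow_natCast (t^α), ← Real.rpow_mul ht'.le]
    have : t ^ (α * (k+j:ℕ)) = t ^ (α * k) * t ^ (α * j) := by
      rw [← Real.rpow_add ht']; congr 1; push_cast; ring
    rw [this]; ring
  rw [setIntegral_congr_fun measurableSet_Ioi e, key3, mul_assoc]
  congr 1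
  have h1 : 1 - r = (p^α + x) * (p^α)⁻¹ := by rw [hr]; field_simp; ring
  have h3 : 0 < p^α + x := by positivity
  rw [h1, mul_pow, Real.rpow_neg h3.le, show ((k:ℝ)+1) = ((k+1:ℕ):ℝ) by push_cast; rfl, Real.rpow_natCast,
    one_div, mul_inv, inv_pow, inv_inv]
  have : p ^ (-(α * k) - 1) * (p^α)^(k+1) = p ^ (-(1-α)) := by
    rw [← Real.rpow_natCast (p^α), ← Real.rpow_mul hp.le, ← Real.rpow_add hp]; congr 1; push_cast; ring
  rw [← this]; ring

lemma HH_nonneg (k : ℕ) (x : ℝ) (hx : 0 < x) : 0 ≤ HH α k x := by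
  have h0 := hα.1
  set P := x ^ (1/α)
  have hP : 0 ≤ P := by positivity
  have := lap_pos (fun t : ℝ => t ^ (α * k) * HH α k (x * t ^ α)) P (hk_cont hα k x hx)
    (fun n q hq => hk_int hα k x hx n q (hP.trans_lt hq)) (fun n => ?_) 1 one_pos
  · simpa using this
  · refine (((CMo_rpow hP n (1-α) (by linarith [hα.2])).mul
      (CMo_res hα hx.le hP n ((k:ℝ)+1) (by positivity))).const_mul (c := k.factorial) (by positivity)).congr ?_
    intro p hp
    refine hk_lap hα k x hx p (hP.trans_lt hp) ?_
    have := Real.rpow_lt_rpow hP hp h0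
    rwa [← Real.rpow_mul hx.le, one_div_mul_cancel h0.ne', Real.rpow_one] at this

lemma MM_nonneg (y : ℝ) (hy : 0 < y) : 0 ≤ MM α y :=
  post_widder (MM α) 0 ((MM_cont hα).mono Set.Ioi_subset_Ici_self) (fun n q hq => HH_int hα n q)
    (fun n q hq => HH_nonneg hα n q hq) y hy
end

lemma rpow_le_exp' (b z : ℝ) (hb : 0 < b) (hz : 0 < z) : z ^ b ≤ b ^ b * Real.exp (z - b) := by
  have h1 : z ≤ b * Real.exp (z/b - 1) := by
    have := Real.add_one_le_exp (z/b - 1)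
    rw [sub_add_cancel, div_le_iff₀ hb] at this
    linarith
  calc z ^ b ≤ (b * Real.exp (z/b - 1)) ^ b := Real.rpow_le_rpow hz.le h1 hb.le
    _ = _ := by
      rw [Real.mul_rpow hb.le (Real.exp_pos _).le, ← Real.exp_mul]
      congr 2; field_simp

lemma Gamma_le' (s : ℝ) (hs : 0 < s) : Real.Gamma (s+1) ≤ 2 * ((2*s)^s * Real.exp (-s)) := by
  rw [Real.Gamma_eq_integral (by linarith)]
  have hi := aux_int_exp (1/2) (by norm_num)
  have e : ∫ x in Set.Ioi (0:ℝ), Real.exp (-(1/2*x)) = 2 := by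
    have := integral_exp_mul_Ioi (a := -(1/2:ℝ)) (by norm_num) 0
    simp only [neg_mul] at this
    rw [this]; norm_num
  calc _ ≤ ∫ x in Set.Ioi (0:ℝ), ((2*s)^s * Real.exp (-s)) * Real.exp (-(1/2*x)) := by
        refine setIntegral_mono_on (Real.GammaIntegral_convergent (by linarith)) (hi.const_mul _) measurableSet_Ioi ?_
        intro x hx
        have hx' : 0 < x := hx
        have h1 := rpow_le_exp' s (x/2) hs (by positivity)
        have h2 : x ^ s = 2 ^ s * (x/2)^s := by
          rw [← Real.mul_rpow (by norm_num) (by positivity)]; congr 1; ring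
        rw [add_sub_cancel_right, h2, Real.mul_rpow (by norm_num) hs.le]
        calc _ ≤ Real.exp (-x) * (2^s * (s^s * Real.exp (x/2 - s))) := by gcongr
          _ = 2^s * s^s * (Real.exp (-x) * Real.exp (x/2-s)) := by ring
          _ = _ := by
            rw [← Real.exp_add, mul_assoc _ (Real.exp (-s)), ← Real.exp_add]; congr 2; ring
    _ = _ := by rw [integral_const_mul, e]; ring

section
variable {α : ℝ} (hα : α ∈ Set.Ioo (0:ℝ) 1)
include hα

lemma fundSol_eq (d : ℕ) (t : ℝ) (ht : 0 < t) (x : EuclideanSpace ℝ (Fin d)) :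
    fundSol α d t x = ∫ y in Set.Ioi (0:ℝ),
      Real.exp (t^α * y) * (Real.exp (-‖x‖ ^ 2 / (4 * (t^α * y))) / (4 * Real.pi * (t^α * y)) ^ ((d : ℝ) / 2)) * MM α y := by
  set b := t ^ (-α) with hb
  have hb0 : 0 < b := by positivity
  have hbT : t^α * b = 1 := by rw [hb, ← Real.rpow_add ht]; simp
  have := integral_comp_mul_left_Ioi (fun y => Real.exp (t^α * y) * (Real.exp (-‖x‖ ^ 2 / (4 * (t^α * y))) / (4 * Real.pi * (t^α * y)) ^ ((d : ℝ) / 2)) * MM α y) 0 hb0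
  simp only [mul_zero, ← mul_assoc (t^α) b, hbT, one_mul] at this
  rw [fundSol, ← hb]
  simp only [MM] at this ⊢
  rw [this, smul_eq_mul, mul_inv_cancel_left₀ hb0.ne']

lemma exp_MM_int (l : ℝ) : IntegrableOn (fun y => Real.exp (l * y) * MM α y) (Set.Ioi 0) := by
  simpa using HH_int hα 0 (-l)

lemma MM_total : ∫ y in Set.Ioi (0:ℝ), MM α y = 1 := by
  simpa using MM_moment hα 0

lemma exp_MM_lower (t κ : ℝ) (ht : 0 < t) (hκ : κ = 2 ^ (-(1 + 1/α))) (hκt : 1 ≤ κ * t) :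
    1/2 * Real.exp (κ * t - 1) ≤ ∫ y in Set.Ioi (0:ℝ), Real.exp (t^α/2 * y) * MM α y := by
  have h0 := hα.1
  have h1 := hα.2
  have hκ0 : 0 < κ := by rw [hκ]; positivity
  set lam := t^α/2 with hlam
  have hl : 0 < lam := by positivity
  set k := ⌊κ * t / α⌋₊ with hk
  have hk1 : 1 ≤ k := Nat.le_floor (by push_cast; rw [le_div_iff₀ h0]; linarith)
  have hk0 : (0:ℝ) < k := by exact_mod_cast hk1
  have hk2 : (k:ℝ) ≤ κ * t / α := Nat.floor_le (by positivity)
  have hk3 : κ * t / α < k + 1 := Nat.lt_floor_add_one _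
  set s := α * k with hs
  have hs0 : 0 < s := by positivity
  have hs1 : s ≤ κ * t := by rw [le_div_iff₀ h0] at hk2; linarith
  have hs2 : κ * t - 1 ≤ s := by rw [div_lt_iff₀ h0] at hk3; nlinarith
  have b1 : lam^k / k.factorial * ∫ y in Set.Ioi (0:ℝ), y^k * MM α y ≤ ∫ y in Set.Ioi (0:ℝ), Real.exp (lam * y) * MM α y := by
    rw [← integral_const_mul]
    refine setIntegral_mono_on ((pow_int hα k).const_mul _) (exp_MM_int hα lam) measurableSet_Ioi ?_
    intro y hy
    have hy' : 0 < y := hy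
    have := Real.pow_div_factorial_le_exp (lam * y) (by positivity) k
    calc _ = (lam * y)^k / k.factorial * MM α y := by rw [mul_pow]; ring
      _ ≤ _ := mul_le_mul_of_nonneg_right this (MM_nonneg hα y hy)
  refine le_trans ?_ b1
  rw [MM_moment hα, ← hs]
  have hG : 0 < Real.Gamma (s+1) := Real.Gamma_pos_of_pos (by linarith)
  have hfac : (0:ℝ) < k.factorial := by positivity
  rw [show lam^k / k.factorial * (k.factorial / Real.Gamma (s+1)) = lam^k / Real.Gamma (s+1) by field_simp]
  rw [le_div_iff₀ hG]
  have e1 : lam ^ k = (2 * (κ * t)) ^ s := by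
    have : 2 * (κ * t) = lam ^ (1/α) := by
      rw [hκ, hlam, Real.div_rpow (by positivity) (by norm_num), ← Real.rpow_mul ht.le, mul_one_div_cancel h0.ne',
        Real.rpow_one, neg_add, Real.rpow_add (by norm_num), Real.rpow_neg_one, Real.rpow_neg (by norm_num)]
      field_simp
    rw [this, ← Real.rpow_mul hl.le, hs, ← Real.rpow_natCast]
    congr 1; field_simp
  rw [e1]
  calc _ ≤ 1/2 * Real.exp s * (2 * ((2*s)^s * Real.exp (-s))) := by
        gcongr
        exact Gamma_le' s hs0
    _ = (2*s)^s * (Real.exp s * Real.exp (-s)) := by ring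
    _ = (2*s)^s := by rw [← Real.exp_add]; simp
    _ ≤ _ := by gcongr

lemma u_lower (d : ℕ) (hd : 1 ≤ d) : ∃ c : ℝ, 0 < c ∧ ∀ (t κ X : ℝ), 0 < t → κ = 2 ^ (-(1 + 1/α)) → 1 ≤ κ * t →
    0 < X → ∀ x : EuclideanSpace ℝ (Fin d), ‖x‖ = X →
    c * Real.exp (-X^2/(4*(κ*t))) * (1/2 * Real.exp (κ * t - 1) - Real.exp (κ*t/2)) ≤ fundSol α d t x := by
  set b : ℝ := (d:ℝ)/2 with hb
  have hb0 : 0 < b := by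
    have : (1:ℝ) ≤ d := by exact_mod_cast hd
    positivity
  set D := (8 * π)^b * b^b with hD
  have hD0 : 0 < D := by positivity
  refine ⟨D⁻¹, by positivity, ?_⟩
  intro t κ X ht hκ hκt hX x hx
  have hκt0 : 0 < κ * t := by linarith
  rw [fundSol_eq hα d t ht, hx, ← hb]
  set T := t^α with hT
  have hT0 : 0 < T := by positivity
  set E := Real.exp (-X^2/(4*(κ*t))) with hE
  set G : ℝ → ℝ := fun y => Real.exp (T * y) * (Real.exp (-X^2 / (4 * (T * y))) / (4 * π * (T * y)) ^ b) with hG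
  have hE0 : 0 < E := Real.exp_pos _
  have hMint : IntegrableOn (MM α) (Set.Ioi 0) := by simpa using pow_int hα 0
  have hGint : IntegrableOn (fun y => G y * MM α y) (Set.Ioi 0) := by
    refine MM_int hα G (by simp only [hG]; fun_prop) 0 (b^b / (π * X^2)^b) T ?_
    intro y hy
    have hs : 0 < T * y := by positivity
    rw [abs_of_nonneg (by simp only [hG]; positivity), pow_zero, one_mul]
    simp only [hG]
    set s := T * y
    have h1 := rpow_le_exp' b (X^2/(4*s)) hb0 (by positivity)
    have h2 : (X^2/(4*s))^b * (4 * π * s)^b = (π * X^2)^b := by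
      rw [← Real.mul_rpow (by positivity) (by positivity)]; congr 1; field_simp
    have h3 : Real.exp (X^2/(4*s) - b) ≤ Real.exp (X^2/(4*s)) := Real.exp_le_exp.2 (by linarith)
    have h4 : 0 < (4 * π * s)^b := by positivity
    have h5 : 0 < (π * X^2)^b := by positivity
    have h6 : Real.exp (-X^2/(4*s)) / (4 * π * s)^b ≤ b^b / (π * X^2)^b := by
      rw [div_le_div_iff₀ h4 h5, ← h2]
      have h7 : Real.exp (-X^2/(4*s)) * Real.exp (X^2/(4*s)) = 1 := by
        rw [← Real.exp_add, neg_div, neg_add_cancel, Real.exp_zero]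
      calc _ ≤ Real.exp (-X^2/(4*s)) * ((b^b * Real.exp (X^2/(4*s))) * (4 * π * s)^b) := by
            gcongr; exact h1.trans (by gcongr)
        _ = b^b * (4*π*s)^b * (Real.exp (-X^2/(4*s)) * Real.exp (X^2/(4*s))) := by ring
        _ = _ := by rw [h7, mul_one]
    rw [mul_comm]
    gcongr
  have i1 : IntegrableOn (fun y => Real.exp (T/2 * y) * MM α y) (Set.Ioi 0) := exp_MM_int hα (T/2)
  have i2 : IntegrableOn (fun y => Real.exp (κ*t/2) * MM α y) (Set.Ioi 0) := hMint.const_mul _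
  have main : D⁻¹ * E * ∫ y in Set.Ioi (0:ℝ), (Real.exp (T/2 * y) * MM α y - Real.exp (κ*t/2) * MM α y) ≤
      ∫ y in Set.Ioi (0:ℝ), G y * MM α y := by
    rw [← integral_const_mul]
    refine setIntegral_mono_on ((i1.sub i2).const_mul _) hGint measurableSet_Ioi ?_
    intro y hy
    have hy' : 0 < y := hy
    have hM := MM_nonneg hα y hy
    have hs : 0 < T * y := by positivity
    rw [← sub_mul, ← mul_assoc]
    refine mul_le_mul_of_nonneg_right ?_ hM
    have hG0 : 0 ≤ G y := by simp only [hG]; positivity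
    have hl : T / 2 * y = (T*y)/2 := by ring
    rw [hl]
    by_cases h : κ * t ≤ T * y
    · simp only [hG]
      set s := T * y
      have h1 : (4 * π * s)^b ≤ D * Real.exp (s/2) := by
        have := rpow_le_exp' b (s/2) hb0 (by positivity)
        have h2 : (4 * π * s)^b = (8*π)^b * (s/2)^b := by
          rw [← Real.mul_rpow (by positivity) (by positivity)]; congr 1; ring
        rw [h2, hD, mul_assoc]
        gcongr
        exact this.trans (by gcongr; linarith)
      have h2 : E ≤ Real.exp (-X^2/(4*s)) := by
        rw [hE, Real.exp_le_exp, neg_div, neg_div, neg_le_neg_iff]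
        gcongr
      calc _ ≤ D⁻¹ * E * Real.exp (s/2) := by
            gcongr; linarith [Real.exp_pos (κ*t/2)]
        _ = Real.exp s * (E / (D * Real.exp (s/2))) := by
            have : Real.exp s = Real.exp (s/2) * Real.exp (s/2) := by rw [← Real.exp_add]; congr 1; ring
            rw [this]; field_simp
        _ ≤ _ := by gcongr
    · refine le_trans ?_ hG0
      apply mul_nonpos_of_nonneg_of_nonpos (by positivity)
      rw [sub_nonpos, Real.exp_le_exp]; linarith
  refine le_trans ?_ main
  rw [integral_sub i1 i2, integral_const_mul (Real.exp (κ*t/2)), MM_total hα, mul_one]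
  gcongr
  exact exp_MM_lower hα t κ ht hκ hκt
end

theorem stmt0 (d : ℕ) (hd : 1 ≤ d) (α β m : ℝ) (hα : α ∈ Set.Ioo (0 : ℝ) 1)
    (hβ : β ∈ Set.Ioo (0 : ℝ) 1) (hm : 0 < m)
    (v : EuclideanSpace ℝ (Fin d)) (hv : ‖v‖ = 1) :
    Tendsto (fun t : ℝ => fundSol α d t ((m * t ^ β) • v)) atTop atTop := by
  obtain ⟨c, hc, hu⟩ := u_lower hα d hd
  set κ : ℝ := 2 ^ (-(1 + 1/α)) with hκ
  have hκ0 : 0 < κ := by positivity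
  have hlim : Tendsto (fun t : ℝ => c * Real.exp (κ/4 * t)) atTop atTop :=
    (Real.tendsto_exp_atTop.comp (tendsto_id.const_mul_atTop (by positivity))).const_mul_atTop hc
  refine tendsto_atTop_mono' _ ?_ hlim
  have t1 : Tendsto (fun t : ℝ => m^2 * t ^ (-(2 - 2*β))) atTop (𝓝 (m^2 * 0)) :=
    (tendsto_rpow_neg_atTop (by linarith [hβ.2])).const_mul _
  rw [mul_zero] at t1
  have t2 : Tendsto (fun t : ℝ => Real.exp (κ/2 * t)) atTop atTop :=
    (Real.tendsto_exp_atTop.comp (tendsto_id.const_mul_atTop (by positivity)))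
  filter_upwards [eventually_gt_atTop 0, eventually_ge_atTop (1/κ), t1.eventually_le_const (show 0 < κ^2 by positivity),
    t2.eventually_ge_atTop (4 * Real.exp 1)] with t ht h1 h2 h3
  have hX : 0 < m * t^β := by positivity
  have hκt : 1 ≤ κ * t := by rw [div_le_iff₀ hκ0] at h1; linarith
  refine le_trans ?_ (hu t κ (m * t^β) ht rfl hκt hX _ (by
    rw [norm_smul, hv, mul_one, Real.norm_of_nonneg hX.le]))
  have e1 : -(κ * t / 4) ≤ -(m * t^β)^2/(4*(κ*t)) := by
    have e : (m * t^β)^2 = m^2 * t ^ (-(2 - 2*β)) * t^2 := by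
      rw [mul_pow, mul_assoc, ← Real.rpow_natCast (t^β), ← Real.rpow_mul ht.le, ← Real.rpow_natCast t 2, ← Real.rpow_add ht]
      congr 2; push_cast; ring
    rw [neg_div, neg_le_neg_iff, e, div_le_iff₀ (by positivity)]
    calc _ ≤ κ^2 * t^2 := by gcongr
      _ = _ := by ring
  have e2 : Real.exp (κ*t/2) ≤ 1/2 * Real.exp (κ * t - 1) - Real.exp (κ*t/2) := by
    have a1 : Real.exp (κ * t - 1) * Real.exp 1 = Real.exp (κ*t/2) * Real.exp (κ*t/2) := by
      rw [← Real.exp_add, ← Real.exp_add]; congr 1; ring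
    have a2 : 4 * Real.exp 1 ≤ Real.exp (κ*t/2) := by
      rw [show κ*t/2 = κ/2*t by ring]; exact h3
    have a3 := Real.exp_pos 1
    have a4 := Real.exp_pos (κ*t/2)
    have : 4 * Real.exp (κ*t/2) ≤ Real.exp (κ * t - 1) := by
      refine le_of_mul_le_mul_right ?_ a3
      rw [a1]; nlinarith
    linarith
  calc c * Real.exp (κ/4*t) = c * Real.exp (-(κ * t / 4)) * Real.exp (κ*t/2) := by
        rw [mul_assoc, ← Real.exp_add]; congr 2; ring
    _ ≤ _ := by gcongr
end

section
/- Let d ≥ 1 be an integer, α ∈ (0,1), β > 1, m > 0, and let v ∈ ℝ^d be a unit vector. Then u_{α,1}(t, m t^β v) → 0 as t → ∞. -/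
open Real MeasureTheory Filter Topology

theorem aux_young (α : ℝ) (hα : α ∈ Set.Ioo (0 : ℝ) 1) (z c : ℝ) (hz : 0 < z) (hc : 0 < c) :
    ∃ C : ℝ, ∀ x : ℝ, z * Real.exp (α * x) ≤ c * Real.exp x + C := by
  obtain ⟨h0, h1⟩ := hα
  have h1a : 0 < 1 - α := by linarith
  set x0 := Real.log (z / c) / (1 - α) with hx0
  refine ⟨z * Real.exp (α * x0), fun x => ?_⟩
  rcases le_total x0 x with h | h
  · have h2 : Real.log (z / c) ≤ (1 - α) * x := by
      rw [hx0, div_le_iff₀ h1a] at h; linarith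
    have h3 : z / c ≤ Real.exp ((1 - α) * x) := by
      rwa [← Real.log_le_iff_le_exp (by positivity)]
    rw [div_le_iff₀ hc] at h3
    have h4 : Real.exp ((1 - α) * x) * Real.exp (α * x) = Real.exp x := by
      rw [← Real.exp_add]; ring_nf
    have : z * Real.exp (α * x) ≤ c * Real.exp x := by
      rw [← h4]
      have := mul_le_mul_of_nonneg_right h3 (Real.exp_pos (α * x)).le
      linarith
    have : 0 < z * Real.exp (α * x0) := by positivity
    linarith
  · have : z * Real.exp (α * x) ≤ z * Real.exp (α * x0) := by gcongr
    have : 0 < c * Real.exp x := by positivity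
    linarith

theorem aux_gamma_int (s : ℝ) (hs : 0 < s) :
    Integrable (fun x : ℝ => Real.exp (s * x - Real.exp x)) ∧
    ∫ x : ℝ, Real.exp (s * x - Real.exp x) = Real.Gamma s := by
  have key : ∀ x : ℝ, |Real.exp x| • (Real.exp (-Real.exp x) * (Real.exp x) ^ (s - 1))
      = Real.exp (s * x - Real.exp x) := by
    intro x
    rw [abs_of_pos (Real.exp_pos x), ← Real.exp_mul, smul_eq_mul, ← Real.exp_add, ← Real.exp_add]
    ring_nf
  have im : Real.exp '' Set.univ = Set.Ioi 0 := by rw [Set.image_univ, Real.range_exp]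
  have hd : ∀ x ∈ (Set.univ : Set ℝ), HasDerivWithinAt Real.exp (Real.exp x) Set.univ x :=
    fun x _ => (Real.hasDerivAt_exp x).hasDerivWithinAt
  have hi := Real.exp_injective.injOn (s := Set.univ)
  constructor
  · have := (integrableOn_image_iff_integrableOn_abs_deriv_smul MeasurableSet.univ hd hi
      (fun x : ℝ => Real.exp (-x) * x ^ (s - 1))).1
      (by rw [im]; exact Real.GammaIntegral_convergent hs)
    simp only [key] at this
    simpa using this
  · have := integral_image_eq_integral_abs_deriv_smul MeasurableSet.univ hd hi
      (fun x : ℝ => Real.exp (-x) * x ^ (s - 1))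
    simp only [key, im] at this
    rw [Real.Gamma_eq_integral hs, this]
    simp

theorem aux_gamma_int' (s c : ℝ) (hs : 0 < s) (hc : 0 < c) :
    Integrable (fun x : ℝ => Real.exp (s * x - c * Real.exp x)) := by
  have := ((aux_gamma_int s hs).1.comp_add_right (Real.log c)).const_mul (Real.exp (-(s * Real.log c)))
  refine this.congr (ae_of_all _ fun x => ?_)
  simp only
  rw [Real.exp_add x, Real.exp_log hc, ← Real.exp_add]
  ring_nf

/-- the contour integrand -/
noncomputable def gW (α z : ℝ) (w : ℂ) : ℂ :=
  Complex.exp (Complex.exp w - z * Complex.exp (α * w) + α * w)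

theorem gW_norm (α z x y : ℝ) : ‖gW α z (x + y * Complex.I)‖ =
    Real.exp (Real.exp x * Real.cos y - z * (Real.exp (α * x) * Real.cos (α * y)) + α * x) := by
  rw [gW, Complex.norm_exp]
  congr 1
  have : (α : ℂ) * (x + y * Complex.I) = ((α * x : ℝ) : ℂ) + ((α * y : ℝ) : ℂ) * Complex.I := by
    push_cast; ring
  rw [this]
  simp only [Complex.add_re, Complex.sub_re, Complex.re_ofReal_mul, Complex.exp_re]
  simp

theorem gW_real (α z x : ℝ) : (gW α z (x : ℂ)).im = 0 := by
  have : gW α z (x : ℂ) = ((Real.exp (Real.exp x - z * Real.exp (α * x) + α * x) : ℝ) : ℂ) := by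
    simp [gW]
  rw [this, Complex.ofReal_im]

theorem gW_diff (α z : ℝ) : Differentiable ℂ (gW α z) := by
  unfold gW; fun_prop

theorem gW_pi (α z x : ℝ) : gW α z (x + Real.pi * Complex.I) =
    Complex.exp (-(Real.exp x : ℂ) + α * (x + Real.pi * Complex.I)) *
      Complex.exp (-z * Complex.exp (α * (x + Real.pi * Complex.I))) := by
  rw [gW, ← Complex.exp_add, Complex.exp_add (x : ℂ), Complex.exp_pi_mul_I]
  push_cast
  ring_nf

theorem gW_int_pi (α z : ℝ) (hα : α ∈ Set.Ioo (0 : ℝ) 1) (hz : 0 < z) :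
    Integrable (fun x : ℝ => Real.exp (-Real.exp x + α * x) * Real.exp (z * Real.exp (α * x))) := by
  obtain ⟨C, hC⟩ := aux_young α hα z (1/2) hz (by norm_num)
  refine ((aux_gamma_int' α (1/2) hα.1 (by norm_num)).const_mul (Real.exp C)).mono'
    (by fun_prop) (ae_of_all _ fun x => ?_)
  rw [Real.norm_of_nonneg (by positivity), ← Real.exp_add, ← Real.exp_add]
  apply Real.exp_le_exp.2
  linarith [hC x]

theorem wright_rep (α z : ℝ) (hα : α ∈ Set.Ioo (0 : ℝ) 1) (hz : 0 < z) :
    Integrable (fun x : ℝ => gW α z (x + Real.pi * Complex.I)) ∧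
    Real.pi * wrightFn (-α) (1 - α) (-z) = (∫ x : ℝ, gW α z (x + Real.pi * Complex.I)).im := by
  have hint := gW_int_pi α z hα hz
  have hn1 : ∀ x : ℝ, ‖Complex.exp (-(Real.exp x : ℂ) + α * (x + Real.pi * Complex.I))‖
      = Real.exp (-Real.exp x + α * x) := by
    intro x
    rw [Complex.norm_exp]; congr 1
    simp [-Complex.ofReal_exp]
  have hn2 : ∀ x : ℝ, ‖-(z : ℂ) * Complex.exp (α * (x + Real.pi * Complex.I))‖
      = z * Real.exp (α * x) := by
    intro x
    rw [norm_mul, Complex.norm_exp]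
    simp [abs_of_pos hz]
  have hsum := hasSum_integral_of_dominated_convergence (μ := (volume : Measure ℝ))
    (F := fun (n : ℕ) (x : ℝ) =>
      Complex.exp (-(Real.exp x : ℂ) + α * (x + Real.pi * Complex.I)) *
      ((-(z : ℂ) * Complex.exp (α * (x + Real.pi * Complex.I))) ^ n / n.factorial))
    (f := fun x : ℝ => gW α z (x + Real.pi * Complex.I))
    (fun (n : ℕ) (x : ℝ) => Real.exp (-Real.exp x + α * x) * ((z * Real.exp (α * x)) ^ n / n.factorial))
    (fun n => by fun_prop)
    (fun n => ae_of_all _ fun x => by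
      simp only [norm_mul (Complex.exp _), norm_div, norm_pow, hn1, hn2]
      simp)
    (ae_of_all _ fun x => (Real.summable_pow_div_factorial _).mul_left _)
    (by
      refine hint.congr (ae_of_all _ fun x => ?_)
      simp only
      rw [tsum_mul_left, Real.exp_eq_exp_ℝ, NormedSpace.exp_eq_tsum_div])
    (ae_of_all _ fun x => by
      rw [gW_pi]
      apply HasSum.mul_left
      rw [Complex.exp_eq_exp_ℂ]
      exact NormedSpace.expSeries_div_hasSum_exp _)
  constructor
  · refine hint.mono' (by unfold gW; fun_prop) (ae_of_all _ fun x => ?_)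
    rw [gW_pi, norm_mul, hn1]
    gcongr
    refine (Complex.norm_exp_le_exp_norm _).trans ?_
    rw [hn2]
  · have h2 := (Complex.hasSum_iff _ _).1 hsum |>.2
    rw [← h2.tsum_eq, wrightFn, ← tsum_mul_left]
    congr 1; ext n
    have hs : 0 < α * (n + 1) := mul_pos hα.1 (by positivity)
    have e1 : ∀ x : ℝ, Complex.exp (-(Real.exp x : ℂ) + α * (x + Real.pi * Complex.I)) *
      ((-(z : ℂ) * Complex.exp (α * (x + Real.pi * Complex.I))) ^ n / n.factorial)
      = (((-z) ^ n / n.factorial : ℝ) : ℂ) * Complex.exp (((Real.pi * (α * (n + 1)) : ℝ) : ℂ) * Complex.I) *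
        ((Real.exp ((α * (n + 1)) * x - Real.exp x) : ℝ) : ℂ) := by
      intro x
      rw [mul_pow, ← Complex.exp_nat_mul]
      push_cast
      rw [div_mul_eq_mul_div, div_mul_eq_mul_div, mul_div_assoc', mul_left_comm, ← Complex.exp_add, mul_assoc, ← Complex.exp_add]
      congr 3
      ring
    simp_rw [e1]
    rw [integral_const_mul, integral_complex_ofReal, (aux_gamma_int _ hs).2]
    rw [mul_assoc, Complex.im_ofReal_mul, Complex.im_mul_ofReal, Complex.exp_ofReal_mul_I_im]
    have hr := Real.Gamma_mul_Gamma_one_sub (α * (n + 1))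
    have hg := Real.Gamma_pos_of_pos hs
    have e2 : -α * n + (1 - α) = 1 - α * (n + 1) := by ring
    rw [e2]
    have e3 : Real.Gamma (1 - α * (n + 1)) = Real.pi / Real.sin (Real.pi * (α * (n + 1))) / Real.Gamma (α * (n + 1)) := by
      rw [← hr]; field_simp
    rw [e3]
    have := Real.pi_ne_zero
    rcases eq_or_ne (Real.sin (Real.pi * (α * (n + 1)))) 0 with h | h
    · simp [h]
    · field_simp

theorem gW_vert (α z a b x B : ℝ) (hab : a ≤ b)
    (h : ∀ y ∈ Set.Icc a b, ‖gW α z (x + y * Complex.I)‖ ≤ B) :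
    ‖∫ y in a..b, gW α z (x + y * Complex.I)‖ ≤ B * (b - a) := by
  have := intervalIntegral.norm_integral_le_of_norm_le_const (a := a) (b := b) (C := B)
    (f := fun y : ℝ => gW α z (x + y * Complex.I))
    (fun y hy => by rw [Set.uIoc_of_le hab] at hy; exact h y ⟨hy.1.le, hy.2⟩)
  rwa [abs_of_nonneg (by linarith)] at this

theorem gW_rect (α z a b p q : ℝ) :
    (∫ x in a..b, gW α z (x + q * Complex.I)).im =
      (∫ x in a..b, gW α z (x + p * Complex.I)).im
      + (∫ y in p..q, gW α z (b + y * Complex.I)).re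
      - (∫ y in p..q, gW α z (a + y * Complex.I)).re := by
  have := Complex.integral_boundary_rect_eq_zero_of_differentiableOn (gW α z)
    ⟨a, p⟩ ⟨b, q⟩ (gW_diff α z).differentiableOn
  have h := congrArg Complex.im this
  simp only [Complex.add_im, Complex.sub_im, smul_eq_mul, Complex.I_mul_im, Complex.zero_im] at h
  linarith

theorem wright_bound (α : ℝ) (hα : α ∈ Set.Ioo (0 : ℝ) 1) :
    ∃ C c : ℝ, 0 < C ∧ 0 < c ∧ ∀ z R : ℝ, 0 < z → 0 < R →
      |wrightFn (-α) (1 - α) (-z)| ≤ C * Real.exp (2 * R - c * z * R ^ α) := by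
  obtain ⟨h0, h1⟩ := hα
  have hpi := Real.pi_pos
  set φ := Real.pi / (1 + α) with hφ
  have hφ1 : Real.pi / 2 < φ := by rw [hφ]; gcongr; linarith
  have hφ2 : φ < Real.pi := by rw [hφ]; apply div_lt_self hpi; linarith
  have hφ3 : α * φ < Real.pi / 2 := by
    have : α * φ = Real.pi - φ := by rw [hφ]; field_simp; ring
    linarith
  set c := Real.cos (α * φ) with hc
  have hαφ : 0 < α * φ := mul_pos h0 (by linarith)
  have hc0 : 0 < c := Real.cos_pos_of_mem_Ioo ⟨by linarith, hφ3⟩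
  set c1 := -Real.cos φ with hc1
  have hc10 : 0 < c1 := by
    have := Real.cos_neg_of_pi_div_two_lt_of_lt hφ1 (by linarith)
    linarith
  have hJ := aux_gamma_int' α c1 h0 hc10
  set J := ∫ x : ℝ, Real.exp (α * x - c1 * Real.exp x) with hJd
  have hJ0 : 0 ≤ J := integral_nonneg fun x => (Real.exp_pos _).le
  refine ⟨Real.pi + J, c, by linarith, hc0, fun z R hz hR => ?_⟩
  obtain ⟨hint, hrep⟩ := wright_rep α z ⟨h0, h1⟩ hz
  set K := Real.log R with hK
  have hRK : Real.exp K = R := Real.exp_log hR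
  have hRα : Real.exp (α * K) = R ^ α := by rw [Real.rpow_def_of_pos hR, mul_comm]
  have hRle : α * K ≤ R := by
    have h2 : K ≤ R - 1 := Real.log_le_sub_one_of_pos hR
    rcases le_total K 0 with h | h
    · have := mul_nonpos_of_nonneg_of_nonpos h0.le h; linarith
    · nlinarith
  -- main bound for finite windows
  have hwin : ∀ N : ℝ, K ≤ N →
      |(∫ x in (-N)..N, gW α z (x + Real.pi * Complex.I)).im| ≤
        (Real.pi + J) * Real.exp (2 * R - c * z * R ^ α)
        + Real.exp (Real.exp (-N) + z * Real.exp (α * (-N)) + α * (-N)) * Real.pi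
        + Real.exp (-c1 * Real.exp N + z * Real.exp (α * N) + α * N) * Real.pi := by
    intro N hN
    have ci : ∀ (a b y : ℝ), IntervalIntegrable (fun x : ℝ => gW α z (x + y * Complex.I)) volume a b := by
      intro a b y
      apply Continuous.intervalIntegrable
      unfold gW; fun_prop
    have ciy : ∀ (a b x : ℝ), IntervalIntegrable (fun y : ℝ => gW α z (x + y * Complex.I)) volume a b := by
      intro a b y
      apply Continuous.intervalIntegrable
      unfold gW; fun_prop
    have s1 := gW_rect α z (-N) K 0 Real.pi
    have s2 := gW_rect α z K N φ Real.pi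
    have s3 : (∫ x in (-N)..K, gW α z (x + (0:ℝ) * Complex.I)).im = 0 := by
      have : ∀ x : ℝ, gW α z (x + (0:ℝ) * Complex.I) = (((gW α z x).re : ℝ) : ℂ) := by
        intro x
        apply Complex.ext
        · simp
        · simp [gW_real]
      simp_rw [this]
      rw [intervalIntegral.integral_ofReal]
      simp
    have s4 := intervalIntegral.integral_add_adjacent_intervals (ci (-N) K Real.pi) (ci K N Real.pi)
    have s5 := intervalIntegral.integral_add_adjacent_intervals (ciy 0 φ K) (ciy φ Real.pi K)
    have e : (∫ x in (-N)..N, gW α z (x + Real.pi * Complex.I)).im =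
        (∫ y in (0:ℝ)..φ, gW α z (K + y * Complex.I)).re
        + (∫ x in K..N, gW α z (x + φ * Complex.I)).im
        - (∫ y in (0:ℝ)..Real.pi, gW α z (((-N : ℝ) : ℂ) + y * Complex.I)).re
        + (∫ y in φ..Real.pi, gW α z (N + y * Complex.I)).re := by
      have s4' := congrArg Complex.im s4
      have s5' := congrArg Complex.re s5
      simp only [Complex.add_im, Complex.add_re] at s4' s5'
      linarith
    have b1 : ‖∫ y in (0:ℝ)..φ, gW α z (K + y * Complex.I)‖ ≤
        Real.exp (2 * R - c * z * R ^ α) * (φ - 0) := by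
      apply gW_vert _ _ _ _ _ _ (by linarith)
      intro y hy
      rw [gW_norm]
      apply Real.exp_le_exp.2
      have k1 : c ≤ Real.cos (α * y) := by
        apply Real.cos_le_cos_of_nonneg_of_le_pi (mul_nonneg h0.le hy.1) (by linarith)
        exact mul_le_mul_of_nonneg_left hy.2 h0.le
      have k2 := Real.cos_le_one y
      rw [hRK, hRα]
      have k3 : R * Real.cos y ≤ R := by nlinarith
      have k4 : z * (R ^ α * c) ≤ z * (R ^ α * Real.cos (α * y)) := by gcongr
      linarith
    have b2 : ‖∫ x in K..N, gW α z (x + φ * Complex.I)‖ ≤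
        Real.exp (2 * R - c * z * R ^ α) * J := by
      have : ‖∫ x in K..N, gW α z (x + φ * Complex.I)‖ ≤
        ∫ x in K..N, Real.exp (2 * R - c * z * R ^ α) * Real.exp (α * x - c1 * Real.exp x) := by
        apply intervalIntegral.norm_integral_le_of_norm_le hN _ (hJ.const_mul _).intervalIntegrable
        refine ae_of_all _ fun x hx => ?_
        rw [gW_norm, ← Real.exp_add]
        apply Real.exp_le_exp.2
        have k1 : R ^ α ≤ Real.exp (α * x) := by
          rw [← hRα]; gcongr; exact hx.1.le
        have k4 : z * (R ^ α * c) ≤ z * (Real.exp (α * x) * c) := by gcongr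
        have : Real.exp x * Real.cos φ = - (c1 * Real.exp x) := by rw [hc1]; ring
        linarith
      refine this.trans ?_
      rw [intervalIntegral.integral_const_mul]
      gcongr
      rw [intervalIntegral.integral_of_le hN]
      exact setIntegral_le_integral hJ (ae_of_all _ fun x => (Real.exp_pos _).le)
    have b3 : ‖∫ y in (0:ℝ)..Real.pi, gW α z (((-N : ℝ) : ℂ) + y * Complex.I)‖ ≤
        Real.exp (Real.exp (-N) + z * Real.exp (α * (-N)) + α * (-N)) * (Real.pi - 0) := by
      apply gW_vert _ _ _ _ _ _ hpi.le
      intro y hy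
      rw [gW_norm]
      apply Real.exp_le_exp.2
      have k2 := Real.cos_le_one y
      have k3 : Real.exp (-N) * Real.cos y ≤ Real.exp (-N) := by
        nlinarith [Real.exp_pos (-N)]
      have k4 : z * (Real.exp (α * (-N)) * (-1)) ≤ z * (Real.exp (α * (-N)) * Real.cos (α * y)) := by
        gcongr; exact Real.neg_one_le_cos _
      linarith
    have b4 : ‖∫ y in φ..Real.pi, gW α z (N + y * Complex.I)‖ ≤
        Real.exp (-c1 * Real.exp N + z * Real.exp (α * N) + α * N) * (Real.pi - φ) := by
      apply gW_vert _ _ _ _ _ _ hφ2.le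
      intro y hy
      rw [gW_norm]
      apply Real.exp_le_exp.2
      have k2 : Real.cos y ≤ -c1 := by
        rw [hc1, neg_neg]
        exact Real.cos_le_cos_of_nonneg_of_le_pi (by linarith) hy.2 hy.1
      have k3 : Real.exp N * Real.cos y ≤ Real.exp N * (-c1) := by gcongr
      have k4 : z * (Real.exp (α * N) * (-1)) ≤ z * (Real.exp (α * N) * Real.cos (α * y)) := by
        gcongr; exact Real.neg_one_le_cos _
      linarith
    have E1 := Real.exp_pos (2 * R - c * z * R ^ α)
    have E2 := Real.exp_pos (-c1 * Real.exp N + z * Real.exp (α * N) + α * N)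
    have a1 := (Complex.abs_re_le_norm _).trans b1
    have a2 := (Complex.abs_im_le_norm _).trans b2
    have a3 := (Complex.abs_re_le_norm _).trans b3
    have a4 := (Complex.abs_re_le_norm _).trans b4
    have m1 := mul_le_mul_of_nonneg_left hφ2.le E1.le
    have m2 : 0 ≤ Real.exp (-c1 * Real.exp N + z * Real.exp (α * N) + α * N) * φ :=
      mul_nonneg E2.le (by linarith)
    rw [e, abs_le]
    rw [abs_le] at a1 a2 a3 a4
    constructor <;> linarith [a1.1, a1.2, a2.1, a2.2, a3.1, a3.2, a4.1, a4.2]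
  -- pass to the limit
  have hl : Tendsto (fun N : ℝ => |(∫ x in (-N)..N, gW α z (x + Real.pi * Complex.I)).im|) atTop
      (𝓝 |Real.pi * wrightFn (-α) (1 - α) (-z)|) := by
    rw [hrep]
    exact (Complex.continuous_im.tendsto _ |>.comp
      (intervalIntegral_tendsto_integral hint tendsto_neg_atTop_atBot tendsto_id)).abs
  have t1 : Tendsto (fun N : ℝ => Real.exp (Real.exp (-N) + z * Real.exp (α * (-N)) + α * (-N)))
      atTop (𝓝 0) := by
    have q : Tendsto (fun N : ℝ => α * (-N)) atTop atBot :=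
      Tendsto.const_mul_atBot h0 tendsto_neg_atTop_atBot
    apply Real.tendsto_exp_atBot.comp
    apply Tendsto.add_atBot (C := 0 + z * 0) _ q
    exact (Real.tendsto_exp_atBot.comp tendsto_neg_atTop_atBot).add
      ((Real.tendsto_exp_atBot.comp q).const_mul z)
  have t2 : Tendsto (fun N : ℝ => Real.exp (-c1 * Real.exp N + z * Real.exp (α * N) + α * N))
      atTop (𝓝 0) := by
    apply Real.tendsto_exp_atBot.comp
    obtain ⟨C, hC⟩ := aux_young α ⟨h0, h1⟩ (z + 1) (c1 / 2) (by linarith) (by linarith)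
    have q : Tendsto (fun N : ℝ => C + (-(c1 / 2)) * Real.exp N) atTop atBot :=
      tendsto_atBot_add_const_left _ _
        (Tendsto.const_mul_atTop_of_neg (by linarith) Real.tendsto_exp_atTop)
    refine tendsto_atBot_mono (fun N => ?_) q
    have := hC N
    have := Real.add_one_le_exp (α * N)
    linarith
  have hr := ((tendsto_const_nhds (x := (Real.pi + J) * Real.exp (2 * R - c * z * R ^ α))
    (f := (atTop : Filter ℝ))).add (t1.mul_const Real.pi)).add (t2.mul_const Real.pi)
  have hfin := le_of_tendsto_of_tendsto hl hr
    ((eventually_ge_atTop K).mono fun N hN => hwin N hN)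
  simp only [zero_mul, add_zero] at hfin
  rw [abs_mul, abs_of_pos hpi] at hfin
  refine le_trans ?_ hfin
  have := Real.pi_gt_three
  nlinarith [abs_nonneg (wrightFn (-α) (1 - α) (-z))]

theorem stmt1 (d : ℕ) (hd : 1 ≤ d) (α β m : ℝ) (hα : α ∈ Set.Ioo (0 : ℝ) 1)
    (hβ : 1 < β) (hm : 0 < m)
    (v : EuclideanSpace ℝ (Fin d)) (hv : ‖v‖ = 1) :
    Tendsto (fun t : ℝ => fundSol α d t ((m * t ^ β) • v)) atTop (nhds 0) := by
  obtain ⟨C, c, hC, hc, hW⟩ := wright_bound α hα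
  obtain ⟨h0, h1⟩ := hα
  set k : ℝ := (3 / c) ^ (1 / α) with hk
  have hk0 : 0 < k := by positivity
  have hkα : c * k ^ α = 3 := by
    rw [hk, ← Real.rpow_mul (by positivity), one_div_mul_cancel h0.ne', Real.rpow_one]
    field_simp
  have hX : Tendsto (fun t : ℝ => m * t ^ β) atTop atTop :=
    Tendsto.const_mul_atTop hm (tendsto_rpow_atTop (by linarith))
  have hbound : ∀ᶠ t : ℝ in atTop, ‖fundSol α d t ((m * t ^ β) • v)‖ ≤
      C * Real.exp (2 * (k * t) - (m * t ^ β) / 2) := by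
    filter_upwards [eventually_ge_atTop 1, hX.eventually_ge_atTop (8 * d)] with t ht hXt
    have ht0 : 0 < t := by linarith
    set X := m * t ^ β with hXd
    have hX0 : 0 < X := by positivity
    have hd1 : (1 : ℝ) ≤ d := by exact_mod_cast hd
    have hXn : ‖X • v‖ = X := by rw [norm_smul, hv, mul_one, Real.norm_of_nonneg hX0.le]
    have hX2 : 8 * (d : ℝ) ≤ X ^ 2 := by nlinarith
    have hta : t ^ (-α) ≤ 1 := Real.rpow_le_one_of_one_le_of_nonpos ht (by linarith)
    have hta0 : 0 < t ^ (-α) := by positivity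
    rw [fundSol, hXn, norm_mul, Real.norm_of_nonneg hta0.le]
    have hI : ‖∫ s in Set.Ioi (0 : ℝ),
        Real.exp s * (Real.exp (-X ^ 2 / (4 * s)) / (4 * Real.pi * s) ^ ((d : ℝ) / 2)) *
        wrightFn (-α) (1 - α) (-(t ^ (-α) * s))‖ ≤
        ∫ s in Set.Ioi (0 : ℝ), (C * Real.exp (2 * (k * t) - X / 2)) * Real.exp (-s) := by
      apply norm_integral_le_of_norm_le
      · exact (integrableOn_exp_neg_Ioi 0).const_mul _
      · refine (ae_restrict_mem measurableSet_Ioi).mono fun s hs => ?_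
        have hs0 : (0 : ℝ) < s := hs
        have hw := hW (t ^ (-α) * s) (k * t) (by positivity) (by positivity)
        have e1 : c * (t ^ (-α) * s) * (k * t) ^ α = 3 * s := by
          rw [Real.mul_rpow hk0.le ht0.le, Real.rpow_neg ht0.le, ← hkα]
          field_simp
        rw [e1] at hw
        set y := 1 / (4 * Real.pi * s) with hy
        have hy0 : 0 < y := by have := Real.pi_pos; positivity
        have e2 : 1 / (4 * Real.pi * s) ^ ((d : ℝ) / 2) ≤ Real.exp (d / s) := by
          have : 1 / (4 * Real.pi * s) ^ ((d : ℝ) / 2) = y ^ ((d : ℝ) / 2) := by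
            rw [hy, Real.div_rpow zero_le_one (by have := Real.pi_pos; positivity), Real.one_rpow]
          rw [this]
          have h2 : y ^ ((d : ℝ) / 2) ≤ (Real.exp y) ^ ((d : ℝ) / 2) := by
            gcongr; linarith [Real.add_one_le_exp y]
          refine h2.trans ?_
          rw [← Real.exp_mul]
          apply Real.exp_le_exp.2
          have h3 : y ≤ 1 / s := by
            rw [hy]; gcongr; nlinarith [Real.pi_gt_three]
          calc y * ((d : ℝ) / 2) ≤ 1 / s * d := by
                gcongr; linarith
            _ = d / s := by ring
        have e3 : (d : ℝ) / s ≤ X ^ 2 / (8 * s) := by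
          rw [div_le_div_iff₀ hs0 (by positivity)]; nlinarith
        have e4 : X / 2 ≤ s + X ^ 2 / (8 * s) := by
          have : s + X ^ 2 / (8 * s) - X / 2 = ((X - 2 * s) ^ 2 + 4 * s ^ 2) / (8 * s) := by
            field_simp; ring
          have : 0 ≤ s + X ^ 2 / (8 * s) - X / 2 := by rw [this]; positivity
          linarith
        have e5 : -X ^ 2 / (4 * s) = -(2 * (X ^ 2 / (8 * s))) := by field_simp; ring
        have e6 : 0 ≤ (4 * Real.pi * s) ^ ((d : ℝ) / 2) := by
          have := Real.pi_pos; positivity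
        rw [norm_mul, Real.norm_of_nonneg (by positivity), Real.norm_eq_abs]
        calc Real.exp s * (Real.exp (-X ^ 2 / (4 * s)) / (4 * Real.pi * s) ^ ((d : ℝ) / 2)) *
              |wrightFn (-α) (1 - α) (-(t ^ (-α) * s))|
            ≤ Real.exp s * (Real.exp (-X ^ 2 / (4 * s)) * Real.exp (d / s)) *
              (C * Real.exp (2 * (k * t) - 3 * s)) := by
              rw [div_eq_mul_one_div]
              gcongr
          _ = C * Real.exp (s + (-X ^ 2 / (4 * s) + d / s) + (2 * (k * t) - 3 * s)) := by
              rw [Real.exp_add, Real.exp_add s, Real.exp_add (-X ^ 2 / (4 * s))]; ring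
          _ ≤ C * Real.exp (2 * (k * t) - X / 2 + -s) := by
              refine mul_le_mul_of_nonneg_left (Real.exp_le_exp.2 ?_) hC.le
              rw [e5]; linarith
          _ = _ := by rw [Real.exp_add]; ring
    rw [integral_const_mul, integral_exp_neg_Ioi_zero, mul_one] at hI
    calc _ ≤ 1 * _ := mul_le_mul hta hI (norm_nonneg _) zero_le_one
      _ = _ := one_mul _
  refine squeeze_zero_norm' hbound ?_
  rw [← mul_zero C]
  apply Tendsto.const_mul
  apply Real.tendsto_exp_atBot.comp
  have hg : Tendsto (fun t : ℝ => m / 2 * t ^ (β - 1) - 2 * k) atTop atTop :=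
    tendsto_atTop_add_const_right _ _
      (Tendsto.const_mul_atTop (by linarith) (tendsto_rpow_atTop (by linarith)))
  have hg2 := tendsto_neg_atTop_atBot.comp (tendsto_id.atTop_mul_atTop₀ hg)
  refine hg2.congr' ?_
  filter_upwards [eventually_gt_atTop 0] with t ht
  simp only [Function.comp, id]
  rw [Real.rpow_sub_one ht.ne']
  field_simp
  ring
end
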